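/- Let T be a finitely generated abelian group and A a finitely generated ℤT-module, and form the semidirect product G = A ⋊ T (with T acting on A through the module structure). Then G is a finitely generated metabelian group, and there exist a finite generating set a₁,…,a_m of A as a ℤT-module and a finite generating set f₁,…,f_l of the kernel S of the natural surjection from the free ℤT-module M on a₁,…,a_m onto A, such that the relative Dehn function of G satisfies δ̃_G(n) ≼ max{n³, (δ_A(n²))³} (the maximum taken pointwise in n), where δ_A is the module Dehn function of S with respect to f₁,…,f_l. -/

import Mathlib

open Function

/-- The length of the reduced word representing an element of a free group. -/
noncomputable def freeNorm {X : Type*} (w : FreeGroup X) : ℕ :=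
  letI := Classical.decEq X
  w.toWord.length

/-- `w` equals a product of exactly `N` conjugates of elements of `R ∪ R⁻¹`. -/
def AreaIs {G : Type*} [Group G] (R : Set G) (w : G) (N : ℕ) : Prop :=
  ∃ r f : Fin N → G, (∀ i, r i ∈ R ∨ (r i)⁻¹ ∈ R) ∧
    w = (List.ofFn fun i => (f i)⁻¹ * r i * f i).prod

/-- The area of `w` with respect to the relators `R` is at most `N`. -/
def AreaLe {G : Type*} [Group G] (R : Set G) (w : G) (N : ℕ) : Prop :=
  ∃ N' ≤ N, AreaIs R w N'

/-- `f ≼ g` : there is `C > 0` with `f n ≤ C * g (C * n) + C * n + C` for all `n`. -/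
def Dominates (f g : ℕ → ℕ) : Prop :=
  ∃ C : ℕ, 0 < C ∧ ∀ n, f n ≤ C * g (C * n) + C * n + C

/-- `f ≈ g` : mutual domination. -/
def DehnEquiv (f g : ℕ → ℕ) : Prop := Dominates f g ∧ Dominates g f

/-- `δ` is the Dehn function of the presentation with relator set `R`. -/
def IsDehnFunctionOf {X : Type*} (R : Set (FreeGroup X)) (δ : ℕ → ℕ) : Prop :=
  ∀ n, IsLeast {N | ∀ w ∈ Subgroup.normalClosure R, freeNorm w ≤ n → AreaLe R w N} (δ n)

/-- A group is metabelian if its derived subgroup is abelian. -/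
def IsMetabelian (G : Type*) [Group G] : Prop :=
  ∀ a b : G, a ∈ commutator G → b ∈ commutator G → a * b = b * a

instance derivedSeriesNormalInst {G : Type*} [Group G] (n : ℕ) : (derivedSeries G n).Normal :=
  derivedSeries_normal G n

/-- The free metabelian group on `X`: the free group modulo its second derived subgroup. -/
abbrev FreeMetabelian (X : Type*) := FreeGroup X ⧸ derivedSeries (FreeGroup X) 2

/-- The word length of `w` in the free metabelian group is at most `n`. -/
def mNormLe {X : Type*} (w : FreeMetabelian X) (n : ℕ) : Prop :=
  ∃ v : FreeGroup X, QuotientGroup.mk' (derivedSeries (FreeGroup X) 2) v = w ∧ freeNorm v ≤ n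

/-- `δ` is the relative Dehn function (in the variety of metabelian groups) of the
relative presentation with relator set `R`. -/
def IsRelDehnFunctionOf {X : Type*} (R : Set (FreeMetabelian X)) (δ : ℕ → ℕ) : Prop :=
  ∀ n, IsLeast {N | ∀ w ∈ Subgroup.normalClosure R, mNormLe w n → AreaLe R w N} (δ n)

/-- The paper's commutator convention: `[x, y] = x⁻¹ * y⁻¹ * x * y`. -/
def pcomm {G : Type*} [Group G] (x y : G) : G := x⁻¹ * y⁻¹ * x * y

/-- A group has torsion-free rank `k` if it has a finite-index subgroup isomorphic to `ℤ^k`. -/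
def HasTFRank (Q : Type*) [Group Q] (k : ℕ) : Prop :=
  ∃ H : Subgroup Q, H.index ≠ 0 ∧ Nonempty (H ≃* Multiplicative (Fin k → ℤ))

/-- `G ⧸ A` is abelian and has torsion-free rank `j`. -/
def QuotientRankProp {G : Type*} [Group G] (A : Subgroup G) [A.Normal] (j : ℕ) : Prop :=
  (∀ x y : G ⧸ A, x * y = y * x) ∧ HasTFRank (G ⧸ A) j

/-- The set of torsion-free ranks of quotients `G ⧸ A` by abelian normal subgroups `A`
with `G ⧸ A` abelian. -/
def abelianRankSet (G : Type*) [Group G] : Set ℕ :=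
  {j | ∃ A : Subgroup G, ∃ h : A.Normal, (∀ x y : G, x ∈ A → y ∈ A → x * y = y * x) ∧
    @QuotientRankProp G _ A h j}
/-- `|λ|` : the sum of the absolute values of the integer coefficients of `λ ∈ ℤT`. -/
noncomputable def ringNorm {T : Type*} (lam : MonoidAlgebra ℤ T) : ℕ :=
  ∑ t ∈ lam.coeff.support, (lam.coeff t).natAbs

/-- The word length of `x` in the group `T` with respect to the generators `gens`. -/
noncomputable def wordLen {T : Type*} [Group T] {q : ℕ} (gens : Fin q → T) (x : T) : ℕ :=
  sInf {n | ∃ w : FreeGroup (Fin q), FreeGroup.lift gens w = x ∧ freeNorm w = n}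

/-- `‖f‖` for `f = Σ μ_j a_j` in the free `ℤT`-module on `a₁,…,a_m` :
`Σ_j Σ_{t ∈ supp μ_j} (|μ_j(t)| + 2 ℓ_T(t))`. -/
noncomputable def modNorm {T : Type*} [Group T] {q m : ℕ} (gens : Fin q → T)
    (g : Fin m → MonoidAlgebra ℤ T) : ℕ :=
  ∑ j, ∑ t ∈ (g j).coeff.support, (((g j).coeff t).natAbs + 2 * wordLen gens t)

/-- `g` can be written as `Σ αᵢ fᵢ` with `Σ |αᵢ| ≤ N`. -/
def ModAreaLe {T : Type*} [CommGroup T] {m l : ℕ}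
    (f : Fin l → (Fin m → MonoidAlgebra ℤ T))
    (g : Fin m → MonoidAlgebra ℤ T) (N : ℕ) : Prop :=
  ∃ α : Fin l → MonoidAlgebra ℤ T, g = ∑ i, α i • f i ∧ ∑ i, ringNorm (α i) ≤ N

/-- `δ` is the Dehn function of the submodule `S` of the free `ℤT`-module with respect
to the generating set `f` of `S` and the generating set `gens` of `T`. -/
def IsModDehnFunctionOf {T : Type*} [CommGroup T] {q m l : ℕ} (gens : Fin q → T)
    (S : Submodule (MonoidAlgebra ℤ T) (Fin m → MonoidAlgebra ℤ T))
    (f : Fin l → (Fin m → MonoidAlgebra ℤ T)) (δ : ℕ → ℕ) : Prop :=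
  ∀ n, IsLeast {N | ∀ g ∈ S, modNorm gens g ≤ n → ModAreaLe f g N} (δ n)
/-- The automorphism of the `ℤT`-module `A` given by the action of `t ∈ T`. -/
noncomputable def modAut {T : Type*} [CommGroup T] {A : Type*} [AddCommGroup A]
    [Module (MonoidAlgebra ℤ T) A] (t : T) : A ≃+ A where
  toFun x := MonoidAlgebra.of ℤ T t • x
  invFun x := MonoidAlgebra.of ℤ T t⁻¹ • x
  left_inv x := by
    show MonoidAlgebra.of ℤ T t⁻¹ • MonoidAlgebra.of ℤ T t • x = x
    rw [smul_smul, ← map_mul, inv_mul_cancel, map_one, one_smul]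
  right_inv x := by
    show MonoidAlgebra.of ℤ T t • MonoidAlgebra.of ℤ T t⁻¹ • x = x
    rw [smul_smul, ← map_mul, mul_inv_cancel, map_one, one_smul]
  map_add' x y := smul_add _ x y

/-- The action of `T` on `A` (through the module structure) as a homomorphism
`T →* MulAut (Multiplicative A)`. -/
noncomputable def modAction (T A : Type*) [CommGroup T] [AddCommGroup A]
    [Module (MonoidAlgebra ℤ T) A] : T →* MulAut (Multiplicative A) :=
  MonoidHom.mk' (fun t => AddEquiv.toMultiplicative (modAut t)) (by
    intro s t
    ext x
    show Multiplicative.ofAdd (MonoidAlgebra.of ℤ T (s * t) • (Multiplicative.toAdd x))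
      = Multiplicative.ofAdd (MonoidAlgebra.of ℤ T s • MonoidAlgebra.of ℤ T t •
          (Multiplicative.toAdd x))
    rw [smul_smul, ← map_mul])

/-! Suppose `x k` represents the generator `a k` of `A`, and `σ t` lifts `t`. In a metabelian
group, `t • e_k ↦ ⁅(x k)⁻¹, σ t⁆` extends to an honest homomorphism from the free `ℤT`-module to
the abelian derived subgroup, and multiplying it by a product of powers of the `x k` gives a
normal form `E g` of `∑ g k • a k`. Two rules have controlled area: `E g * E g' = E (g + g')`,
and conjugating `E g` by `σ s` gives `E (s • g)`.

Collecting a word of length `n` that represents `1` therefore turns it into `E g` with `g` in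
the relation module `S`, at cubic cost. Write `g = ∑ α i • f i` with `D = ∑ |α i|` at most about
`δ_A (n²)`. Adding up the `E (α i • f i)` costs `D ^ 2` times the radius of a ball that contains
the support of `α`, and this radius may be assumed to be `O(n + D)`: of any `D + 1` disjoint
annuli, one misses the support of `α`, so if they lie outside the ball of radius `n` and are
wide compared with the supports of the `f i`, the part of `α` beyond that annulus contributes
`0` to `g` and can be dropped. So the area of `E g` is
`O(D ^ 2 * (n + D)) = O(max (n ^ 3) (D ^ 3))`. -/

open scoped commutatorElement Pointwise

section Area

variable {H : Type*} [Group H] {R : Set H} {x y z : H} {m n : ℕ}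

theorem areaLe_iff_exists_list :
    AreaLe R x n ↔ ∃ l : List H, l.length ≤ n ∧ (∀ u ∈ l, u ∈ Group.conjugatesOfSet (R ∪ R⁻¹)) ∧
      l.prod = x := by
  simp only [Group.mem_conjugatesOfSet_iff, Set.mem_union, Set.mem_inv, isConj_iff]
  constructor
  · rintro ⟨N, hN, r, f, hr, rfl⟩
    refine ⟨_, by simpa using hN, ?_, rfl⟩
    rw [List.forall_mem_ofFn_iff]
    exact fun i => ⟨r i, hr i, (f i)⁻¹, by simp⟩
  · rintro ⟨l, hl, hconj, rfl⟩
    choose r hr f hf using fun i : Fin l.length => hconj l[i] (List.getElem_mem i.2)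
    refine ⟨l.length, hl, r, fun i => (f i)⁻¹, hr, ?_⟩
    simp_rw [inv_inv, hf, Fin.getElem_fin, List.ofFn_getElem]

namespace AreaLe

theorem mono (h : AreaLe R x m) (hmn : m ≤ n) : AreaLe R x n :=
  let ⟨N, hN, hx⟩ := h
  ⟨N, hN.trans hmn, hx⟩

theorem one : AreaLe R (1 : H) 0 :=
  areaLe_iff_exists_list.2 ⟨[], by simp⟩

theorem mul (hx : AreaLe R x m) (hy : AreaLe R y n) : AreaLe R (x * y) (m + n) := by
  rw [areaLe_iff_exists_list] at *
  obtain ⟨l, hl, hlR, rfl⟩ := hx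
  obtain ⟨k, hk, hkR, rfl⟩ := hy
  exact ⟨l ++ k, by rw [List.length_append]; lia,
    fun u hu => (List.mem_append.1 hu).elim (hlR u) (hkR u), List.prod_append⟩

theorem inv (hx : AreaLe R x n) : AreaLe R x⁻¹ n := by
  rw [areaLe_iff_exists_list] at *
  obtain ⟨l, hl, hlR, rfl⟩ := hx
  refine ⟨(l.map (·⁻¹)).reverse, by simpa, fun u hu => ?_, l.prod_inv_reverse.symm⟩
  rw [List.mem_reverse, List.mem_map] at hu
  obtain ⟨v, hv, rfl⟩ := hu
  obtain ⟨r, hr, hrv⟩ := Group.mem_conjugatesOfSet_iff.1 (hlR v hv)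
  obtain ⟨c, rfl⟩ := isConj_iff.1 hrv
  refine Group.mem_conjugatesOfSet_iff.2 ⟨r⁻¹, ?_, isConj_iff.2 ⟨c, by group⟩⟩
  simpa [or_comm] using hr

theorem conj (hx : AreaLe R x n) (y : H) : AreaLe R (y * x * y⁻¹) n := by
  rw [areaLe_iff_exists_list] at *
  obtain ⟨l, hl, hlR, rfl⟩ := hx
  refine ⟨l.map (MulAut.conj y), by simpa, fun u hu => ?_, ?_⟩
  · obtain ⟨v, hv, rfl⟩ := List.mem_map.1 hu
    exact Group.conj_mem_conjugatesOfSet (hlR v hv)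
  · rw [← map_list_prod, MulAut.conj_apply]

end AreaLe

theorem exists_areaLe_iff_mem_normalClosure :
    (∃ n, AreaLe R x n) ↔ x ∈ Subgroup.normalClosure R := by
  constructor
  · rintro ⟨n, hn⟩
    obtain ⟨l, -, hlR, rfl⟩ := areaLe_iff_exists_list.1 hn
    refine Subgroup.list_prod_mem _ fun u hu => Group.conjugatesOfSet_subset ?_ (hlR u hu)
    rintro r (hr | hr)
    · exact Subgroup.subset_normalClosure hr
    · exact inv_mem_iff.1 (Subgroup.subset_normalClosure hr)
  · intro hx
    refine Subgroup.closure_induction (fun u hu => ⟨1, ?_⟩) ⟨0, AreaLe.one⟩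
      (fun _ _ _ _ ⟨_, hu⟩ ⟨_, hv⟩ => ⟨_, hu.mul hv⟩) (fun _ _ ⟨_, hu⟩ => ⟨_, hu.inv⟩) hx
    exact areaLe_iff_exists_list.2
      ⟨[u], by simp, by simpa using Group.conjugatesOfSet_mono Set.subset_union_left hu, by simp⟩

/-- `x` and `y` agree up to an error of area at most `n`: an approximate equality whose
errors add up along a chain. -/
def EqWithin (R : Set H) (n : ℕ) (x y : H) : Prop := AreaLe R (x * y⁻¹) n

namespace EqWithin

variable {x' y' : H}

theorem mono (h : EqWithin R m x y) (hmn : m ≤ n) : EqWithin R n x y :=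
  AreaLe.mono h hmn

theorem refl (x : H) : EqWithin R 0 x x := by
  simpa [EqWithin] using AreaLe.one

theorem symm (h : EqWithin R n x y) : EqWithin R n y x := by
  simpa [EqWithin] using AreaLe.inv h

theorem trans (h : EqWithin R m x y) (h' : EqWithin R n y z) : EqWithin R (m + n) x z := by
  simpa [EqWithin, mul_assoc] using AreaLe.mul h h'

theorem mul (h : EqWithin R m x y) (h' : EqWithin R n x' y') :
    EqWithin R (m + n) (x * x') (y * y') := by
  have key : AreaLe R (x * (x' * y'⁻¹) * x⁻¹ * (x * y⁻¹)) (n + m) := (AreaLe.conj h' x).mul h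
  rw [EqWithin, add_comm]
  convert key using 1
  group

theorem mul_left (h : EqWithin R n x y) (z : H) : EqWithin R n (z * x) (z * y) := by
  simpa using (refl z).mul h

theorem mul_right (h : EqWithin R n x y) (z : H) : EqWithin R n (x * z) (y * z) := by
  simpa using h.mul (refl z)

theorem conj (h : EqWithin R n x y) (z : H) : EqWithin R n (z * x * z⁻¹) (z * y * z⁻¹) :=
  (h.mul_left z).mul_right z⁻¹

theorem inv (h : EqWithin R n x y) : EqWithin R n x⁻¹ y⁻¹ := by
  have key : AreaLe R (x⁻¹ * (x * y⁻¹)⁻¹ * x⁻¹⁻¹) n := (AreaLe.inv h).conj x⁻¹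
  rw [EqWithin]
  convert key using 1
  group

theorem areaLe (h : EqWithin R m x y) (hy : AreaLe R y n) : AreaLe R x (m + n) := by
  simpa using AreaLe.mul h hy

theorem map_eq {G : Type*} [Group G] {ρ : H →* G} (hρ : ρ.ker = Subgroup.normalClosure R)
    (h : EqWithin R n x y) : ρ x = ρ y := by
  rw [← mul_inv_eq_one, ← map_inv, ← map_mul, ← MonoidHom.mem_ker, hρ,
    ← exists_areaLe_iff_mem_normalClosure]
  exact ⟨n, h⟩

end EqWithin

theorem eqWithin_mul_comm_iff : EqWithin R n (x * y) (y * x) ↔ AreaLe R ⁅x, y⁆ n := by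
  simp [EqWithin, commutatorElement_def, mul_assoc]

theorem exists_forall_of_monotone {ι : Type*} [Finite ι] {P : ι → ℕ → Prop}
    (hP : ∀ i, Monotone (P i)) (h : ∀ i, ∃ n, P i n) : ∃ n, ∀ i, P i n := by
  cases nonempty_fintype ι
  choose f hf using h
  exact ⟨∑ i, f i, fun i =>
    hP i (Finset.single_le_sum (fun _ _ => Nat.zero_le _) (Finset.mem_univ i)) (hf i)⟩

theorem AreaLe.exists_forall {ι : Type*} [Finite ι] {w : ι → H}
    (h : ∀ i, w i ∈ Subgroup.normalClosure R) : ∃ n, ∀ i, AreaLe R (w i) n :=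
  exists_forall_of_monotone (fun _ _ _ hmn h => h.mono hmn) fun i =>
    exists_areaLe_iff_mem_normalClosure.2 (h i)

end Area

section Commutator

variable {H : Type*} [Group H] {R : Set H} {a c x y z : H} {m n : ℕ}

theorem commutatorElement_mem_commutator (x y : H) : ⁅x, y⁆ ∈ commutator H :=
  Subgroup.commutator_mem_commutator (Subgroup.mem_top x) (Subgroup.mem_top y)

namespace AreaLe

theorem commutator_symm (h : AreaLe R ⁅x, y⁆ n) : AreaLe R ⁅y, x⁆ n := by
  simpa using h.inv

theorem commutator_mul_left (hx : AreaLe R ⁅x, z⁆ m) (hy : AreaLe R ⁅y, z⁆ n) :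
    AreaLe R ⁅x * y, z⁆ (m + n) := by
  have key : AreaLe R (x * ⁅y, z⁆ * x⁻¹ * ⁅x, z⁆) (n + m) := (hy.conj x).mul hx
  rwa [commutatorElement_mul_left_eq_conj_mul, add_comm]

theorem commutator_inv_left (h : AreaLe R ⁅x, z⁆ n) : AreaLe R ⁅x⁻¹, z⁆ n := by
  simpa [commutatorElement_inv_left] using h.commutator_symm.conj x⁻¹

theorem commutator_mul_right (hy : AreaLe R ⁅x, y⁆ m) (hz : AreaLe R ⁅x, z⁆ n) :
    AreaLe R ⁅x, y * z⁆ (m + n) :=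
  (hy.commutator_symm.commutator_mul_left hz.commutator_symm).commutator_symm

theorem commutator_inv_right (h : AreaLe R ⁅x, y⁆ n) : AreaLe R ⁅x, y⁻¹⁆ n :=
  h.commutator_symm.commutator_inv_left.commutator_symm

theorem commutator_pow_right (h : AreaLe R ⁅x, y⁆ n) (k : ℕ) : AreaLe R ⁅x, y ^ k⁆ (k * n) := by
  induction k with
  | zero => simpa using one
  | succ k ih =>
    rw [pow_succ, add_one_mul]
    exact ih.commutator_mul_right h

theorem commutator_zpow_right (h : AreaLe R ⁅x, y⁆ n) (k : ℤ) :
    AreaLe R ⁅x, y ^ k⁆ (k.natAbs * n) := by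
  obtain ⟨k, rfl | rfl⟩ := k.eq_nat_or_neg
  · simpa using h.commutator_pow_right k
  · simpa using (h.commutator_pow_right k).commutator_inv_right

theorem commutator_conj_right (hH : IsMetabelian H) (hc : c ∈ commutator H)
    (h : AreaLe R ⁅a, c⁆ n) (y : H) : AreaLe R ⁅a, y * c * y⁻¹⁆ n := by
  -- `y⁻¹ * a * y = a * ⁅a⁻¹, y⁻¹⁆`, and the second factor commutes with `c`.
  have hcomm : ⁅a⁻¹, y⁻¹⁆ * c = c * ⁅a⁻¹, y⁻¹⁆ := hH _ _ (commutatorElement_mem_commutator _ _) hc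
  have key : ⁅a, y * c * y⁻¹⁆ = y * ⁅a, c⁆ * y⁻¹ := calc
    _ = y * (a * (⁅a⁻¹, y⁻¹⁆ * c) * ⁅a⁻¹, y⁻¹⁆⁻¹ * a⁻¹ * c⁻¹) * y⁻¹ := by
      simp only [commutatorElement_def]; group
    _ = _ := by rw [hcomm]; simp only [commutatorElement_def]; group
  exact key ▸ h.conj y

theorem commutator_commutator_mul_right (hH : IsMetabelian H) (hy : AreaLe R ⁅a, ⁅x, y⁆⁆ m)
    (hz : AreaLe R ⁅a, ⁅x, z⁆⁆ n) : AreaLe R ⁅a, ⁅x, y * z⁆⁆ (m + n) := by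
  rw [commutatorElement_mul_right_eq_mul_conj, mul_assoc ⁅x, y⁆, mul_assoc ⁅x, y⁆]
  exact hy.commutator_mul_right
    (hz.commutator_conj_right hH (commutatorElement_mem_commutator x z) y)

theorem commutator_commutator_inv_right (hH : IsMetabelian H) (h : AreaLe R ⁅a, ⁅x, y⁆⁆ n) :
    AreaLe R ⁅a, ⁅x, y⁻¹⁆⁆ n := by
  have key : AreaLe R ⁅a, ⁅y, x⁆⁆ n := by simpa using h.commutator_inv_right
  simpa [commutatorElement_inv_right] using
    key.commutator_conj_right hH (commutatorElement_mem_commutator y x) y⁻¹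

theorem commutator_commutator_pow_right (hH : IsMetabelian H) (h : AreaLe R ⁅a, ⁅x, y⁆⁆ n)
    (k : ℕ) : AreaLe R ⁅a, ⁅x, y ^ k⁆⁆ (k * n) := by
  induction k with
  | zero => simpa using one
  | succ k ih =>
    rw [pow_succ, add_one_mul]
    exact ih.commutator_commutator_mul_right hH h

theorem commutator_commutator_zpow_right (hH : IsMetabelian H) (h : AreaLe R ⁅a, ⁅x, y⁆⁆ n)
    (k : ℤ) : AreaLe R ⁅a, ⁅x, y ^ k⁆⁆ (k.natAbs * n) := by
  obtain ⟨k, rfl | rfl⟩ := k.eq_nat_or_neg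
  · simpa using h.commutator_commutator_pow_right hH k
  · simpa using (h.commutator_commutator_pow_right hH k).commutator_commutator_inv_right hH

end AreaLe

end Commutator

section ZPowProd

variable {H G J : Type*} [Group H] [Group G] {R : Set H} {a x : H} {y : J → H} {l : List J}
  {v w : J → ℤ} {n : ℕ}

/-- The ordered product `y j₁ ^ v j₁ * ⋯ * y jₖ ^ v jₖ` along the list `l = [j₁, …, jₖ]`: the
collected form of an element of a group that is abelian up to relators. -/
def zpowProd (y : J → H) (l : List J) (v : J → ℤ) : H := (l.map fun j => y j ^ v j).prod

/-- The `ℓ¹`-norm of an integer vector along a list of coordinates. -/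
def listNorm (l : List J) (v : J → ℤ) : ℕ := (l.map fun j => (v j).natAbs).sum

@[simp]
theorem zpowProd_nil : zpowProd y [] v = 1 := rfl

@[simp]
theorem zpowProd_cons (j : J) : zpowProd y (j :: l) v = y j ^ v j * zpowProd y l v := by
  simp [zpowProd]

@[simp]
theorem zpowProd_zero : zpowProd y l 0 = 1 := by
  induction l with simp [*]

@[simp]
theorem listNorm_nil : listNorm [] v = 0 := rfl

@[simp]
theorem listNorm_cons (j : J) : listNorm (j :: l) v = (v j).natAbs + listNorm l v := by
  simp [listNorm]

theorem listNorm_le_add {u : J → ℤ} (h : ∀ j, (u j).natAbs ≤ (v j).natAbs + (w j).natAbs) :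
    listNorm l u ≤ listNorm l v + listNorm l w := by
  induction l with
  | nil => simp
  | cons j l ih =>
    have := h j
    simp only [listNorm_cons]
    lia

theorem zpowProd_single [DecidableEq J] (j : J) :
    zpowProd y l (Pi.single j 1) = y j ^ l.count j := by
  induction l with
  | nil => simp
  | cons i l ih =>
    rw [zpowProd_cons, ih]
    obtain rfl | hij := eq_or_ne i j
    · rw [Pi.single_eq_same, zpow_one, List.count_cons_self, pow_succ']
    · rw [Pi.single_eq_of_ne hij, zpow_zero, one_mul, List.count_cons_of_ne hij]

theorem map_zpowProd (ρ : H →* G) : ρ (zpowProd y l v) = zpowProd (fun j => ρ (y j)) l v := by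
  simp [zpowProd, map_list_prod, Function.comp_def]

theorem AreaLe.commutator_zpowProd_right (h : ∀ j, AreaLe R ⁅x, y j⁆ n) :
    AreaLe R ⁅x, zpowProd y l v⁆ (listNorm l v * n) := by
  induction l with
  | nil => simpa using AreaLe.one
  | cons j l ih =>
    rw [zpowProd_cons, listNorm_cons, add_mul]
    exact ((h j).commutator_zpow_right (v j)).commutator_mul_right ih

theorem AreaLe.commutator_commutator_zpowProd_right (hH : IsMetabelian H)
    (h : ∀ j, AreaLe R ⁅a, ⁅x, y j⁆⁆ n) :
    AreaLe R ⁅a, ⁅x, zpowProd y l v⁆⁆ (listNorm l v * n) := by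
  induction l with
  | nil => simpa using AreaLe.one
  | cons j l ih =>
    rw [zpowProd_cons, listNorm_cons, add_mul]
    exact ((h j).commutator_commutator_zpow_right hH (v j)).commutator_commutator_mul_right hH ih

theorem eqWithin_zpowProd_mul_zpowProd (h : ∀ i j, AreaLe R ⁅y i, y j⁆ n) :
    EqWithin R (listNorm l v * listNorm l w * n)
      (zpowProd y l v * zpowProd y l w) (zpowProd y l (v + w)) := by
  induction l with
  | nil => simpa using EqWithin.refl 1
  | cons j l ih =>
    have hswap : EqWithin R ((w j).natAbs * (listNorm l v * n))
        (zpowProd y l v * y j ^ w j) (y j ^ w j * zpowProd y l v) :=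
      eqWithin_mul_comm_iff.2 <| AreaLe.commutator_zpow_right
        (AreaLe.commutator_zpowProd_right fun i => h j i).commutator_symm (w j)
    have key : EqWithin R ((w j).natAbs * (listNorm l v * n) + listNorm l v * listNorm l w * n)
        (zpowProd y (j :: l) v * zpowProd y (j :: l) w) (zpowProd y (j :: l) (v + w)) := by
      convert ((hswap.mul_left (y j ^ v j)).mul_right (zpowProd y l w)).trans
        (z := y j ^ (v j + w j) * zpowProd y l (v + w)) ?_ using 1
      · simp [mul_assoc]
      · simp
      · convert ih.mul_left (y j ^ (v j + w j)) using 1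
        simp [zpow_add, mul_assoc]
    refine key.mono ?_
    simp only [listNorm_cons]
    calc _ = listNorm l v * ((w j).natAbs + listNorm l w) * n := by ring
      _ ≤ _ := by gcongr; exact Nat.le_add_left _ _

theorem eqWithin_zpowProd_congr (h : ∀ j, EqWithin R n (y j ^ v j) (y j ^ w j)) :
    EqWithin R (l.length * n) (zpowProd y l v) (zpowProd y l w) := by
  induction l with
  | nil => simpa using EqWithin.refl 1
  | cons j l ih =>
    rw [zpowProd_cons, zpowProd_cons, List.length_cons, add_one_mul, add_comm]
    exact (h j).mul ih

end ZPowProd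

section L1Norm

variable {T ι κ : Type*}

theorem ringNorm_eq_sum_of_subset {a : MonoidAlgebra ℤ T} {s : Finset T}
    (h : a.coeff.support ⊆ s) : ringNorm a = ∑ t ∈ s, (a.coeff t).natAbs :=
  Finset.sum_subset h fun t _ ht => by simpa using ht

@[simp]
theorem ringNorm_zero : ringNorm (0 : MonoidAlgebra ℤ T) = 0 := by simp [ringNorm]

@[simp]
theorem ringNorm_neg (a : MonoidAlgebra ℤ T) : ringNorm (-a) = ringNorm a := by
  simp [ringNorm, MonoidAlgebra.coeff_neg, Finsupp.support_neg]

@[simp]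
theorem ringNorm_single (t : T) : ringNorm (MonoidAlgebra.single t (1 : ℤ)) = 1 := by
  rw [ringNorm_eq_sum_of_subset (s := {t})]
  · simp
  · exact Finsupp.support_single_subset

theorem ringNorm_add_le (a b : MonoidAlgebra ℤ T) :
    ringNorm (a + b) ≤ ringNorm a + ringNorm b := by
  classical
  rw [ringNorm_eq_sum_of_subset (a := a + b) (s := a.coeff.support ∪ b.coeff.support)
      Finsupp.support_add,
    ringNorm_eq_sum_of_subset (a := a) Finset.subset_union_left,
    ringNorm_eq_sum_of_subset (a := b) Finset.subset_union_right, ← Finset.sum_add_distrib]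
  exact Finset.sum_le_sum fun t _ => Int.natAbs_add_le _ _

/-- The basis element `t • e_k` of the free abelian group underlying the free module on `ι`. -/
noncomputable def monomial [DecidableEq ι] (k : ι) (t : T) : ι → MonoidAlgebra ℤ T :=
  Pi.single k (MonoidAlgebra.single t 1)

theorem monomial_apply [DecidableEq ι] (k j : ι) (t : T) :
    monomial k t j = if j = k then MonoidAlgebra.single t 1 else 0 :=
  Pi.single_apply k _ j

theorem of_smul_monomial [DecidableEq ι] [Monoid T] (s : T) (k : ι) (t : T) :
    MonoidAlgebra.of ℤ T s • monomial k t = monomial k (s * t) := by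
  simp [monomial, ← Pi.single_smul, MonoidAlgebra.single_mul_single]

theorem linearCombination_monomial [DecidableEq ι] [Fintype ι] [Monoid T] {M : Type*}
    [AddCommGroup M] [Module (MonoidAlgebra ℤ T) M] (f : ι → M) (k : ι) (t : T) :
    Fintype.linearCombination (MonoidAlgebra ℤ T) f (monomial k t) =
      MonoidAlgebra.of ℤ T t • f k := by
  simp [monomial, Fintype.linearCombination_apply_single]

/-- The `ℓ¹`-norm of an element of a free `ℤT`-module, as an element of a free abelian group. -/
noncomputable def l1Norm [Fintype ι] (g : ι → MonoidAlgebra ℤ T) : ℕ := ∑ k, ringNorm (g k)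

/-- The elements of a free `ℤT`-module all of whose coefficients are supported on `U`. -/
def supportedOn (ι : Type*) (U : Set T) : AddSubgroup (ι → MonoidAlgebra ℤ T) where
  carrier := {g | ∀ k t, (g k).coeff t ≠ 0 → t ∈ U}
  zero_mem' _ _ h := absurd rfl h
  add_mem' {g h} hg hh k t ht := by
    by_contra hU
    exact ht (by simp [of_not_not (mt (hg k t) hU), of_not_not (mt (hh k t) hU)])
  neg_mem' {g} hg k t ht := hg k t (by simpa using ht)

theorem monomial_mem_supportedOn [DecidableEq ι] {U : Set T} {t : T} (ht : t ∈ U) (k : ι) :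
    monomial k t ∈ supportedOn ι U := by
  intro j s hs
  rw [monomial_apply] at hs
  split_ifs at hs
  · obtain rfl : t = s := by by_contra h; simp [h] at hs
    exact ht
  · simp at hs

theorem supportedOn_mono {U V : Set T} (h : U ⊆ V) : supportedOn ι U ≤ supportedOn ι V :=
  fun _ hg k t ht => h (hg k t ht)

theorem supportedOn_le_mono {len : T → ℕ} {m n : ℕ} (h : m ≤ n) :
    supportedOn ι {t | len t ≤ m} ≤ supportedOn ι {t | len t ≤ n} :=
  supportedOn_mono fun _ ht => le_trans ht h

theorem eq_zero_of_mem_supportedOn {U V : Set T} (hUV : Disjoint U V)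
    {g : ι → MonoidAlgebra ℤ T} (hU : g ∈ supportedOn ι U) (hV : g ∈ supportedOn ι V) :
    g = 0 := by
  funext k
  ext t
  by_contra ht
  exact hUV.notMem_of_mem_left (hU k t ht) (hV k t ht)

theorem eq_sum_zsmul_monomial [DecidableEq ι] [Fintype ι] (g : ι → MonoidAlgebra ℤ T) :
    g = ∑ k, ∑ t ∈ (g k).coeff.support, (g k).coeff t • monomial k t := by
  funext j
  ext u
  simp [monomial_apply, Finset.sum_apply, ← Finsupp.sum.eq_1]

theorem linearCombination_mem_supportedOn [Fintype κ] [Monoid T] {f : κ → ι → MonoidAlgebra ℤ T}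
    {U V : Set T} (hf : ∀ i, f i ∈ supportedOn ι V) {α : κ → MonoidAlgebra ℤ T}
    (hα : α ∈ supportedOn κ U) :
    Fintype.linearCombination (MonoidAlgebra ℤ T) f α ∈ supportedOn ι (U * V) := by
  classical
  intro k u hu
  rw [Fintype.linearCombination_apply, Finset.sum_apply, MonoidAlgebra.coeff_sum,
    Finsupp.finsetSum_apply] at hu
  obtain ⟨i, -, hi⟩ := Finset.exists_ne_zero_of_sum_ne_zero hu
  obtain ⟨s, hs, t, ht, rfl⟩ := Finset.mem_mul.1
    (MonoidAlgebra.support_coeff_mul_subset (α i) (f i k) (Finsupp.mem_support_iff.2 hi))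
  exact Set.mul_mem_mul (hα i s (Finsupp.mem_support_iff.1 hs))
    (hf i k t (Finsupp.mem_support_iff.1 ht))

section Fintype

variable [Fintype ι]

@[simp]
theorem l1Norm_zero : l1Norm (0 : ι → MonoidAlgebra ℤ T) = 0 := by simp [l1Norm]

@[simp]
theorem l1Norm_neg (g : ι → MonoidAlgebra ℤ T) : l1Norm (-g) = l1Norm g := by simp [l1Norm]

theorem l1Norm_add_le (g h : ι → MonoidAlgebra ℤ T) : l1Norm (g + h) ≤ l1Norm g + l1Norm h := by
  simp only [l1Norm, ← Finset.sum_add_distrib]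
  exact Finset.sum_le_sum fun k _ => ringNorm_add_le _ _

@[simp]
theorem l1Norm_monomial [DecidableEq ι] (k : ι) (t : T) : l1Norm (monomial k t) = 1 := by
  simp [l1Norm, monomial_apply, apply_ite]

theorem l1Norm_induction [DecidableEq ι] {U : Set T} {P : (ι → MonoidAlgebra ℤ T) → ℕ → Prop}
    (zero : P 0 0) (add : ∀ g h m n, P g m → P h n → P (g + h) (m + n))
    (monomial : ∀ k, ∀ t ∈ U, P (monomial k t) 1)
    (neg_monomial : ∀ k, ∀ t ∈ U, P (-_root_.monomial k t) 1) {g : ι → MonoidAlgebra ℤ T}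
    (hg : g ∈ supportedOn ι U) : P g (l1Norm g) := by
  let S : AddSubmonoid ((ι → MonoidAlgebra ℤ T) × ℕ) :=
    { carrier := {p | P p.1 p.2}
      zero_mem' := zero
      add_mem' := fun hp hq => add _ _ _ _ hp hq }
  have zsmul_mem (k : ι) {t : T} (ht : t ∈ U) (z : ℤ) :
      (z • _root_.monomial k t, z.natAbs) ∈ S := by
    obtain ⟨n, rfl | rfl⟩ := z.eq_nat_or_neg
    · simpa using nsmul_mem (show (_root_.monomial k t, 1) ∈ S from monomial k t ht) n
    · simpa using nsmul_mem (show (-_root_.monomial k t, 1) ∈ S from neg_monomial k t ht) n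
  have key : (g, l1Norm g) = ∑ k, ∑ t ∈ (g k).coeff.support,
      ((g k).coeff t • _root_.monomial k t, ((g k).coeff t).natAbs) := by
    simp only [Prod.ext_iff, Prod.fst_sum, Prod.snd_sum]
    exact ⟨eq_sum_zsmul_monomial g, rfl⟩
  change (g, l1Norm g) ∈ S
  rw [key]
  exact sum_mem fun k _ => sum_mem fun t ht =>
    zsmul_mem k (hg k t (Finsupp.mem_support_iff.1 ht)) _

theorem natAbs_coeff_le_l1Norm (g : ι → MonoidAlgebra ℤ T) (k : ι) (t : T) :
    ((g k).coeff t).natAbs ≤ l1Norm g := by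
  classical
  calc ((g k).coeff t).natAbs
      ≤ ∑ s ∈ insert t (g k).coeff.support, ((g k).coeff s).natAbs :=
        Finset.single_le_sum (f := fun s => ((g k).coeff s).natAbs) (fun _ _ => Nat.zero_le _)
          (Finset.mem_insert_self t _)
    _ = ringNorm (g k) := (ringNorm_eq_sum_of_subset (Finset.subset_insert t _)).symm
    _ ≤ l1Norm g := Finset.single_le_sum (f := fun k => ringNorm (g k))
      (fun _ _ => Nat.zero_le _) (Finset.mem_univ k)

theorem finite_setOf_mem_supportedOn_l1Norm_le {U : Set T} (hU : U.Finite) (n : ℕ) :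
    {g | g ∈ supportedOn ι U ∧ l1Norm g ≤ n}.Finite := by
  have := hU.to_subtype
  refine Set.Finite.of_finite_image (f := fun g (p : ι × U) => (g p.1).coeff p.2) ?_ ?_
  · refine (Set.Finite.pi' fun _ => Set.finite_Icc (-n : ℤ) n).subset ?_
    rintro _ ⟨g, ⟨-, hg⟩, rfl⟩ p
    have := (natAbs_coeff_le_l1Norm g p.1 p.2).trans hg
    simp only [Set.mem_Icc]
    lia
  · intro g hg h hh hgh
    funext k
    ext t
    by_cases ht : t ∈ U
    · exact congrFun hgh (k, ⟨t, ht⟩)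
    · rw [of_not_not (mt (hg.1 k t) ht), of_not_not (mt (hh.1 k t) ht)]

theorem l1Norm_of_smul_le [Monoid T] (s : T) (g : ι → MonoidAlgebra ℤ T) :
    l1Norm (MonoidAlgebra.of ℤ T s • g) ≤ l1Norm g := by
  classical
  refine l1Norm_induction (U := Set.univ)
    (P := fun g n => l1Norm (MonoidAlgebra.of ℤ T s • g) ≤ n) ?_ (fun g h m n hg hh => ?_)
    (fun k t _ => ?_) (fun k t _ => ?_) (fun _ _ _ => Set.mem_univ _)
  · simp
  · rw [smul_add]
    exact (l1Norm_add_le _ _).trans (add_le_add hg hh)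
  · rw [of_smul_monomial, l1Norm_monomial]
  · rw [smul_neg, of_smul_monomial, l1Norm_neg, l1Norm_monomial]

theorem l1Norm_linearCombination_le [Fintype κ] [Monoid T] {f : κ → ι → MonoidAlgebra ℤ T} {M : ℕ}
    (hf : ∀ i, l1Norm (f i) ≤ M) (α : κ → MonoidAlgebra ℤ T) :
    l1Norm (Fintype.linearCombination (MonoidAlgebra ℤ T) f α) ≤ l1Norm α * M := by
  classical
  have key (i : κ) (t : T) : l1Norm (MonoidAlgebra.of ℤ T t • f i) ≤ 1 * M :=
    (l1Norm_of_smul_le t (f i)).trans ((hf i).trans_eq (one_mul M).symm)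
  refine l1Norm_induction (U := Set.univ)
    (P := fun α n => l1Norm (Fintype.linearCombination (MonoidAlgebra ℤ T) f α) ≤ n * M)
    ?_ (fun α β m n hα hβ => ?_) (fun i t _ => ?_) (fun i t _ => ?_) (fun _ _ _ => Set.mem_univ _)
  · simp
  · rw [map_add, add_mul]
    exact (l1Norm_add_le _ _).trans (add_le_add hα hβ)
  · rw [linearCombination_monomial]
    exact key i t
  · rw [map_neg, l1Norm_neg, linearCombination_monomial]
    exact key i t

end Fintype

end L1Norm

section LengthFunction

variable {T : Type*} [Group T]

/-- A subadditive, inversion-invariant function on a group, such as a word length. -/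
structure IsLengthFunction (len : T → ℕ) : Prop where
  map_one : len 1 = 0
  map_mul_le (s t : T) : len (s * t) ≤ len s + len t
  map_inv_le (t : T) : len t⁻¹ ≤ len t

theorem freeNorm_eq_norm {X : Type*} [DecidableEq X] (w : FreeGroup X) :
    freeNorm w = w.norm := by
  unfold freeNorm FreeGroup.norm
  congr!

variable {q : ℕ} {gens : Fin q → T}

theorem wordLen_lift_le (w : FreeGroup (Fin q)) :
    wordLen gens (FreeGroup.lift gens w) ≤ w.norm :=
  Nat.sInf_le ⟨w, rfl, freeNorm_eq_norm w⟩

theorem exists_lift_eq_norm_eq_wordLen (hgens : Subgroup.closure (Set.range gens) = ⊤) (t : T) :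
    ∃ w : FreeGroup (Fin q), FreeGroup.lift gens w = t ∧ w.norm = wordLen gens t := by
  obtain ⟨w, rfl⟩ : t ∈ (FreeGroup.lift gens).range := by
    simp [FreeGroup.range_lift_eq_closure, hgens]
  obtain ⟨v, hv, hv'⟩ := Nat.sInf_mem (s := {n | ∃ v : FreeGroup (Fin q),
    FreeGroup.lift gens v = FreeGroup.lift gens w ∧ freeNorm v = n}) ⟨_, w, rfl, rfl⟩
  exact ⟨v, hv, (freeNorm_eq_norm v).symm.trans hv'⟩

theorem isLengthFunction_wordLen (hgens : Subgroup.closure (Set.range gens) = ⊤) :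
    IsLengthFunction (wordLen gens) where
  map_one := by simpa using wordLen_lift_le (gens := gens) 1
  map_mul_le s t := by
    obtain ⟨v, rfl, hv⟩ := exists_lift_eq_norm_eq_wordLen hgens s
    obtain ⟨w, rfl, hw⟩ := exists_lift_eq_norm_eq_wordLen hgens t
    rw [← hv, ← hw, ← map_mul]
    exact (wordLen_lift_le _).trans (FreeGroup.norm_mul_le v w)
  map_inv_le t := by
    obtain ⟨w, rfl, hw⟩ := exists_lift_eq_norm_eq_wordLen hgens t
    rw [← hw, ← map_inv, ← FreeGroup.norm_inv_eq]
    exact wordLen_lift_le _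

theorem finite_setOf_wordLen_le (hgens : Subgroup.closure (Set.range gens) = ⊤) (n : ℕ) :
    {t | wordLen gens t ≤ n}.Finite := by
  refine ((List.finite_length_le (Fin q × Bool) n).image
    fun L => FreeGroup.lift gens (FreeGroup.mk L)).subset fun t ht => ?_
  obtain ⟨w, rfl, hw⟩ := exists_lift_eq_norm_eq_wordLen hgens t
  exact ⟨w.toWord, hw.trans_le ht, congrArg _ FreeGroup.mk_toWord⟩

theorem exists_le_mul_wordLen (hgens : Subgroup.closure (Set.range gens) = ⊤) {F : T → ℕ}
    (hone : F 1 = 0) (hmul : ∀ s t, F (s * t) ≤ F s + F t) :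
    ∃ M, ∀ t, F t ≤ M * wordLen gens t := by
  obtain ⟨M, hM⟩ := exists_forall_of_monotone
    (P := fun (p : Fin q × Bool) n => F (cond p.2 (gens p.1) (gens p.1)⁻¹) ≤ n)
    (fun _ _ _ hmn h => h.trans hmn) (fun _ => ⟨_, le_rfl⟩)
  have key (L : List (Fin q × Bool)) : F (FreeGroup.lift gens (FreeGroup.mk L)) ≤ M * L.length := by
    rw [FreeGroup.lift_mk]
    induction L with
    | nil => simp [hone]
    | cons p L ih =>
      rw [List.map_cons, List.prod_cons, List.length_cons, mul_add_one, add_comm]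
      exact (hmul _ _).trans (add_le_add (hM p) ih)
  refine ⟨M, fun t => ?_⟩
  obtain ⟨w, rfl, hw⟩ := exists_lift_eq_norm_eq_wordLen hgens t
  rw [← hw, ← FreeGroup.mk_toWord (x := w)]
  simpa [FreeGroup.norm] using key w.toWord

end LengthFunction

section ModNorm

variable {T : Type*} [Group T] {q m n : ℕ} {gens : Fin q → T} {g : Fin m → MonoidAlgebra ℤ T}

theorem l1Norm_le_modNorm : l1Norm g ≤ modNorm gens g :=
  Finset.sum_le_sum fun _ _ => Finset.sum_le_sum fun _ _ => Nat.le_add_right _ _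

theorem mem_supportedOn_modNorm : g ∈ supportedOn _ {t | wordLen gens t ≤ modNorm gens g} := by
  intro k t ht
  calc wordLen gens t ≤ ((g k).coeff t).natAbs + 2 * wordLen gens t := by lia
    _ ≤ ∑ s ∈ (g k).coeff.support, (((g k).coeff s).natAbs + 2 * wordLen gens s) :=
      Finset.single_le_sum (f := fun s => ((g k).coeff s).natAbs + 2 * wordLen gens s)
        (fun _ _ => Nat.zero_le _) (Finsupp.mem_support_iff.2 ht)
    _ ≤ modNorm gens g :=
      Finset.single_le_sum (f := fun j => ∑ s ∈ (g j).coeff.support,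
        (((g j).coeff s).natAbs + 2 * wordLen gens s)) (fun _ _ => Nat.zero_le _)
        (Finset.mem_univ k)

theorem modNorm_le (hg : g ∈ supportedOn _ {t | wordLen gens t ≤ n}) :
    modNorm gens g ≤ l1Norm g * (1 + 2 * n) := by
  rw [l1Norm, Finset.sum_mul]
  refine Finset.sum_le_sum fun k _ => ?_
  rw [ringNorm, Finset.sum_mul]
  refine Finset.sum_le_sum fun t ht => ?_
  have ht : (g k).coeff t ≠ 0 := Finsupp.mem_support_iff.1 ht
  have hlen : wordLen gens t ≤ n := hg k t ht
  have hcoeff : 1 ≤ ((g k).coeff t).natAbs := Int.natAbs_pos.2 ht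
  nlinarith

theorem finite_setOf_modNorm_le (hgens : Subgroup.closure (Set.range gens) = ⊤) (n : ℕ) :
    {g : Fin m → MonoidAlgebra ℤ T | modNorm gens g ≤ n}.Finite :=
  (finite_setOf_mem_supportedOn_l1Norm_le (finite_setOf_wordLen_le hgens n) n).subset fun _ hg =>
    ⟨supportedOn_le_mono hg mem_supportedOn_modNorm, l1Norm_le_modNorm.trans hg⟩

end ModNorm

section Truncation

variable {T ι κ : Type*}

theorem exists_gap (s : Finset ℕ) (n w : ℕ) :
    ∃ k ≤ s.card, ∀ x ∈ s, n + w * k < x → n + w * k + w < x := by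
  have hcard : (s.image fun x => (x - n - 1) / w).card < (Finset.range (s.card + 1)).card := by
    simpa [Nat.lt_succ_iff] using Finset.card_image_le
  obtain ⟨k, hk, hks⟩ := Finset.exists_mem_notMem_of_card_lt_card hcard
  refine ⟨k, Nat.lt_succ_iff.1 (Finset.mem_range.1 hk), fun x hx hlt => ?_⟩
  by_contra! hle
  refine hks (Finset.mem_image.2 ⟨x, hx, ?_⟩)
  exact Nat.div_eq_of_lt_le (by rw [mul_comm]; lia) (by rw [mul_comm, mul_add_one]; lia)

open Classical in
/-- The part of an element of a free `ℤT`-module whose coefficients are supported on `U`. -/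
noncomputable def restrict (U : Set T) (α : κ → MonoidAlgebra ℤ T) : κ → MonoidAlgebra ℤ T :=
  fun i => MonoidAlgebra.ofCoeff ((α i).coeff.filter (· ∈ U))

variable {U V : Set T} {α : κ → MonoidAlgebra ℤ T}

open Classical in
theorem coeff_restrict (i : κ) (t : T) :
    (restrict U α i).coeff t = if t ∈ U then (α i).coeff t else 0 := by
  simp [restrict, Finsupp.filter_apply]

theorem restrict_mem_supportedOn : restrict U α ∈ supportedOn κ U := by
  intro i t ht
  by_contra hU
  simp [coeff_restrict, hU] at ht

theorem sub_restrict_mem_supportedOn (hα : α ∈ supportedOn κ V) :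
    α - restrict U α ∈ supportedOn κ (V \ U) := by
  intro i t ht
  by_cases hU : t ∈ U
  · simp [coeff_restrict, hU] at ht
  · exact ⟨hα i t (by simpa [coeff_restrict, hU] using ht), hU⟩

theorem l1Norm_restrict_le [Fintype κ] : l1Norm (restrict U α) ≤ l1Norm α := by
  classical
  refine Finset.sum_le_sum fun i _ => ?_
  have hsupp : (restrict U α i).coeff.support ⊆ (α i).coeff.support := fun t ht => by
    rw [Finsupp.mem_support_iff, coeff_restrict] at ht
    exact Finsupp.mem_support_iff.2 fun h => ht (by simp [h])
  rw [ringNorm_eq_sum_of_subset hsupp]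
  refine Finset.sum_le_sum fun t _ => ?_
  rw [coeff_restrict]
  split_ifs <;> simp

theorem exists_mem_supportedOn_gap [Fintype κ] (len : T → ℕ) (α : κ → MonoidAlgebra ℤ T)
    (n w : ℕ) :
    ∃ k ≤ l1Norm α, α ∈ supportedOn κ {t | n + w * k < len t → n + w * k + w < len t} := by
  classical
  let s := Finset.univ.biUnion fun i => (α i).coeff.support
  have hs : s.card ≤ l1Norm α := Finset.card_biUnion_le.trans <| Finset.sum_le_sum fun i _ => by
    rw [Finset.card_eq_sum_ones]
    exact Finset.sum_le_sum fun t ht => Int.natAbs_pos.2 (Finsupp.mem_support_iff.1 ht)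
  obtain ⟨k, hk, hgap⟩ := exists_gap (s.image len) n w
  refine ⟨k, hk.trans (Finset.card_image_le.trans hs), fun i t ht => hgap _ ?_⟩
  exact Finset.mem_image_of_mem _
    (Finset.mem_biUnion.2 ⟨i, Finset.mem_univ i, Finsupp.mem_support_iff.2 ht⟩)

theorem IsLengthFunction.linearCombination_mem_supportedOn [Fintype κ] [Group T] {len : T → ℕ}
    (hlen : IsLengthFunction len) {f : κ → ι → MonoidAlgebra ℤ T} {c r : ℕ}
    (hf : ∀ i, f i ∈ supportedOn ι {t | len t ≤ c}) {α : κ → MonoidAlgebra ℤ T}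
    (hα : α ∈ supportedOn κ {t | len t ≤ r}) :
    Fintype.linearCombination (MonoidAlgebra ℤ T) f α ∈ supportedOn ι {t | len t ≤ r + c} := by
  refine supportedOn_mono ?_ (_root_.linearCombination_mem_supportedOn hf hα)
  rintro _ ⟨s, hs, t, ht, rfl⟩
  exact (hlen.map_mul_le s t).trans (add_le_add hs ht)

-- The coefficients beyond a gap of width `2 * c` in the lengths contribute to a part of the
-- linear combination that nothing can cancel, so this part vanishes.
theorem exists_linearCombination_eq_of_mem_supportedOn [Fintype κ] [Group T] {len : T → ℕ}
    (hlen : IsLengthFunction len) {f : κ → ι → MonoidAlgebra ℤ T} {c n : ℕ}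
    (hf : ∀ i, f i ∈ supportedOn ι {t | len t ≤ c}) {α : κ → MonoidAlgebra ℤ T}
    (hα : Fintype.linearCombination (MonoidAlgebra ℤ T) f α ∈ supportedOn ι {t | len t ≤ n}) :
    ∃ β, Fintype.linearCombination (MonoidAlgebra ℤ T) f β =
        Fintype.linearCombination (MonoidAlgebra ℤ T) f α ∧
      β ∈ supportedOn κ {t | len t ≤ n + 2 * c * l1Norm α} ∧ l1Norm β ≤ l1Norm α := by
  obtain ⟨k, hk, hgap⟩ := exists_mem_supportedOn_gap len α n (2 * c)
  set r := n + 2 * c * k with hr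
  let β := restrict {t | len t ≤ r} α
  have hβ : β ∈ supportedOn κ {t | len t ≤ r} := restrict_mem_supportedOn
  have hnear : Fintype.linearCombination (MonoidAlgebra ℤ T) f β ∈
      supportedOn ι {t | len t ≤ r + c} := hlen.linearCombination_mem_supportedOn hf hβ
  have hfar : Fintype.linearCombination (MonoidAlgebra ℤ T) f (α - β) ∈
      supportedOn ι {t | r + c < len t} := by
    refine supportedOn_mono ?_
      (linearCombination_mem_supportedOn hf (sub_restrict_mem_supportedOn hgap))
    rintro _ ⟨s, ⟨hs, hsr⟩, t, ht, rfl⟩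
    have hst := hlen.map_mul_le (s * t) t⁻¹
    have hs : r + 2 * c < len s := hs (not_le.1 hsr)
    have ht : len t ≤ c := ht
    have ht' := hlen.map_inv_le t
    rw [mul_inv_cancel_right] at hst
    change r + c < len (s * t)
    lia
  have hzero : Fintype.linearCombination (MonoidAlgebra ℤ T) f (α - β) = 0 := by
    refine eq_zero_of_mem_supportedOn (U := {t | len t ≤ r + c}) ?_ ?_ hfar
    · exact Set.disjoint_left.2 fun t ht ht' => not_lt_of_ge (show len t ≤ r + c from ht) ht'
    · rw [map_sub]
      exact sub_mem (supportedOn_le_mono (by lia) hα) hnear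
  refine ⟨β, ?_, supportedOn_le_mono ?_ hβ, l1Norm_restrict_le⟩
  · rw [map_sub, sub_eq_zero] at hzero
    exact hzero.symm
  · rw [hr]
    gcongr

end Truncation

section Coordinates

variable {T J : Type*} [CommGroup T] [Fintype J]

/-- Integer coordinates on an abelian group with respect to the generators of a decomposition into
cyclic factors. They are additive only up to relations between the generators, of which finitely
many suffice because of `exists_natAbs_defect_le`. -/
structure IsCoordinateSystem (gen : J → T) (coord : T → J → ℤ) : Prop where
  zpowProd_coord (t : T) : zpowProd gen Finset.univ.toList (coord t) = t
  coord_one : coord 1 = 0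
  natAbs_coord_mul_le (s t : T) (j : J) :
    (coord (s * t) j).natAbs ≤ (coord s j).natAbs + (coord t j).natAbs
  gen_zpow_defect (s t : T) (j : J) : gen j ^ (coord s j + coord t j - coord (s * t) j) = 1
  exists_natAbs_defect_le :
    ∃ n, ∀ s t j, (coord s j + coord t j - coord (s * t) j).natAbs ≤ n

theorem zpowProd_toList_eq_prod (y : J → T) (v : J → ℤ) :
    zpowProd y Finset.univ.toList v = ∏ j, y j ^ v j :=
  Finset.prod_map_toList _ _

/-- With the convention `ZMod 0 = ℤ`, infinite cyclic factors are allowed. -/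
theorem exists_mulEquiv_pi_multiplicative_zmod (T : Type*) [CommGroup T] [Group.FG T] :
    ∃ (J : Type) (_ : Fintype J) (N : J → ℕ),
      Nonempty (T ≃* ((j : J) → Multiplicative (ZMod (N j)))) := by
  obtain ⟨ι, κ, _, _, p, -, e, ⟨E⟩⟩ := CommGroup.equiv_free_prod_prod_multiplicative_zmod T
  let N : κ ⊕ ι → ℕ := Sum.elim (fun _ => 0) fun i => p i ^ e i
  let F := (Equiv.sumPiEquivProdPi fun x => Multiplicative (ZMod (N x))).symm
  exact ⟨κ ⊕ ι, inferInstance, N, ⟨E.trans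
    { F with map_mul' := fun g h => by ext (k | i) <;> rfl }⟩⟩

theorem natAbs_valMinAbs_defect_le {n : ℕ} (a b : ZMod n) :
    (a.valMinAbs + b.valMinAbs - (a + b).valMinAbs).natAbs ≤ 2 * n := by
  obtain rfl | hn := eq_or_ne n 0
  · exact (congrArg Int.natAbs (sub_self (G := ℤ) (a + b))).le
  · have : NeZero n := ⟨hn⟩
    have ha := ZMod.natAbs_valMinAbs_le a
    have hb := ZMod.natAbs_valMinAbs_le b
    have hab := ZMod.natAbs_valMinAbs_le (a + b)
    lia

theorem exists_isCoordinateSystem (T : Type*) [CommGroup T] [Group.FG T] :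
    ∃ (J : Type) (_ : Fintype J) (gen : J → T) (coord : T → J → ℤ),
      IsCoordinateSystem gen coord := by
  classical
  obtain ⟨J, _, N, ⟨E⟩⟩ := exists_mulEquiv_pi_multiplicative_zmod T
  let coord (t : T) (j : J) : ℤ := (Multiplicative.toAdd (E t j)).valMinAbs
  let gen (j : J) : T := E.symm (Pi.mulSingle j (Multiplicative.ofAdd 1))
  have map_gen_zpow (j : J) (z : ℤ) :
      E (gen j ^ z) = Pi.mulSingle j (Multiplicative.ofAdd (z : ZMod (N j))) := by
    rw [map_zpow, E.apply_symm_apply, ← Pi.mulSingle_zpow, ← ofAdd_zsmul, zsmul_one]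
  refine ⟨J, inferInstance, gen, coord, ⟨fun t => E.injective ?_, ?_, fun s t j => ?_,
    fun s t j => E.injective ?_, ∑ j, 2 * N j, fun s t j => ?_⟩⟩
  · rw [zpowProd_toList_eq_prod, map_prod]
    simp only [map_gen_zpow, coord, ZMod.coe_valMinAbs, ofAdd_toAdd]
    exact Finset.univ_prod_mulSingle (E t)
  · funext j
    simp [coord]
  · simpa [coord] using (ZMod.natAbs_valMinAbs_add_le _ _).trans (Int.natAbs_add_le _ _)
  · simp [map_gen_zpow, coord]
  · calc _ ≤ 2 * N j := by simpa [coord] using natAbs_valMinAbs_defect_le _ _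
      _ ≤ _ := Finset.single_le_sum (f := fun j => 2 * N j) (fun _ _ => Nat.zero_le _)
        (Finset.mem_univ j)

end Coordinates

section FreeAbelian

variable {T ι B : Type*} [AddCommGroup B]

/-- The homomorphism on a free `ℤT`-module with prescribed values on the basis elements `t • e_k` of
the underlying free abelian group. -/
noncomputable def monomialLift [Fintype ι] (Y : ι → T → B) : (ι → MonoidAlgebra ℤ T) →+ B :=
  ∑ k, (Finsupp.liftAddHom fun t => zmultiplesHom B (Y k t)).comp
    (MonoidAlgebra.coeffAddEquiv.toAddMonoidHom.comp (Pi.evalAddMonoidHom _ k))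

theorem monomialLift_monomial [Fintype ι] [DecidableEq ι] (Y : ι → T → B) (k : ι) (t : T) :
    monomialLift Y (monomial k t) = Y k t := by
  rw [monomialLift, AddMonoidHom.finsetSum_apply, Finset.sum_eq_single k]
  · simp [monomial_apply]
  · intro j _ hj
    simp [monomial_apply, hj]
  · simp

open Classical in
/-- The augmentation of each coordinate of an element of a free `ℤT`-module. -/
noncomputable def augmentation [Fintype ι] : (ι → MonoidAlgebra ℤ T) →+ (ι → ℤ) :=
  monomialLift fun k _ => Pi.single k 1

theorem augmentation_monomial [Fintype ι] [DecidableEq ι] (k : ι) (t : T) :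
    augmentation (monomial k t) = Pi.single k 1 := by
  classical
  rw [augmentation]
  convert monomialLift_monomial _ k t

end FreeAbelian

section NormalForm

variable {H : Type*} [Group H] {T ι : Type*} {R : Set H} {x : ι → H} {σ : T → H} {C r : ℕ}
  {len : T → ℕ}

theorem exists_mem_supportedOn_le [Finite ι] (len : T → ℕ) (g : ι → MonoidAlgebra ℤ T) :
    ∃ r, g ∈ supportedOn ι {t | len t ≤ r} := by
  cases nonempty_fintype ι
  exact ⟨Finset.univ.sup fun k => (g k).coeff.support.sup len, fun k _ ht =>
    (Finset.le_sup (Finsupp.mem_support_iff.2 ht)).trans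
      (Finset.le_sup (f := fun k => (g k).coeff.support.sup len) (Finset.mem_univ k))⟩

theorem IsLengthFunction.of_smul_mem_supportedOn [Group T] (hlen : IsLengthFunction len)
    {g : ι → MonoidAlgebra ℤ T} (hg : g ∈ supportedOn ι {t | len t ≤ r}) (s : T) :
    MonoidAlgebra.of ℤ T s • g ∈ supportedOn ι {t | len t ≤ len s + r} := by
  intro k t ht
  have hst : len (s⁻¹ * t) ≤ r := hg k _ (by simpa using ht)
  simpa using (hlen.map_mul_le s (s⁻¹ * t)).trans (Nat.add_le_add_left hst _)

theorem listNorm_augmentation_le [Fintype ι] (g : ι → MonoidAlgebra ℤ T) :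
    listNorm Finset.univ.toList (augmentation g) ≤ l1Norm g := by
  classical
  have key (k : ι) : listNorm Finset.univ.toList (Pi.single k (1 : ℤ)) = 1 := by
    simp [listNorm, Pi.single_apply, Finset.sum_map_toList, apply_ite]
  refine l1Norm_induction (U := Set.univ)
    (P := fun g n => listNorm Finset.univ.toList (augmentation g) ≤ n) ?_ (fun g h m n hg hh => ?_)
    (fun k t _ => ?_) (fun k t _ => ?_) (fun _ _ _ => Set.mem_univ _)
  · simp [listNorm]
  · rw [map_add]
    exact (listNorm_le_add fun j => Int.natAbs_add_le _ _).trans (add_le_add hg hh)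
  · rw [augmentation_monomial, key]
  · rw [map_neg, augmentation_monomial, ← key k]
    simp [listNorm]

/-- The commutator subgroup of a metabelian group as a commutative group. -/
abbrev IsMetabelian.commGroupCommutator (hH : IsMetabelian H) : CommGroup (commutator H) where
  mul_comm a b := Subtype.ext (hH a b a.2 b.2)

/-- The homomorphism `t • e_k ↦ ⁅(x k)⁻¹, σ t⁆` from a free `ℤT`-module, as a free abelian group,
to the commutator subgroup of a metabelian group. -/
noncomputable def commutatorHom [Fintype ι] (hH : IsMetabelian H) (x : ι → H) (σ : T → H) :
    Multiplicative (ι → MonoidAlgebra ℤ T) →* H :=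
  letI := hH.commGroupCommutator
  (commutator H).subtype.comp <| AddMonoidHom.toMultiplicativeLeft <| monomialLift fun k t =>
    Additive.ofMul ⟨⁅(x k)⁻¹, σ t⁆, commutatorElement_mem_commutator _ _⟩

theorem commutatorHom_monomial [Fintype ι] [DecidableEq ι] (hH : IsMetabelian H) (k : ι) (t : T) :
    commutatorHom hH x σ (Multiplicative.ofAdd (monomial k t)) = ⁅(x k)⁻¹, σ t⁆ := by
  let _ := hH.commGroupCommutator
  simp [commutatorHom, monomialLift_monomial]

/-- The element of a metabelian group that represents an element `g` of a free `ℤT`-module when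
`x k` represents `e_k` and conjugation by `σ t` represents multiplication by `t`. For `g = t • e_k`
it is `σ t * x k * (σ t)⁻¹ = x k * ⁅(x k)⁻¹, σ t⁆`. -/
noncomputable def normalForm [Fintype ι] (hH : IsMetabelian H) (x : ι → H) (σ : T → H)
    (g : ι → MonoidAlgebra ℤ T) : H :=
  zpowProd x Finset.univ.toList (augmentation g) * commutatorHom hH x σ (Multiplicative.ofAdd g)

section Fintype

variable [Fintype ι] (hH : IsMetabelian H)

@[simp]
theorem normalForm_zero : normalForm hH x σ 0 = 1 := by simp [normalForm]

theorem normalForm_monomial [DecidableEq ι] (k : ι) (t : T) :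
    normalForm hH x σ (monomial k t) = σ t * x k * (σ t)⁻¹ := by
  have hk : Finset.univ.toList.count k = 1 :=
    List.count_eq_one_of_mem (Finset.nodup_toList _) (by simp)
  rw [normalForm, augmentation_monomial, commutatorHom_monomial, zpowProd_single, hk]
  simp [commutatorElement_def, mul_assoc]

end Fintype

/-- Elements `x k` that commute with each other and with their conjugates modulo the relators `R`,
together with a section `σ` of a quotient group `T` that is multiplicative modulo `R`, with bounds
for the areas of these relations in terms of a length function on `T`. -/
structure IsCoarseSplitting [Mul T] (R : Set H) (len : T → ℕ) (x : ι → H) (σ : T → H) (C : ℕ) :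
    Prop where
  mul (s t : T) : EqWithin R (C * (len s * len t + 1)) (σ s * σ t) (σ (s * t))
  commutator_commutator (i k : ι) (t : T) : AreaLe R ⁅x i, ⁅(x k)⁻¹, σ t⁆⁆ (C * (len t + 1))
  commutator (i j : ι) : AreaLe R ⁅x i, x j⁆ C

theorem IsCoarseSplitting.areaLe_map_one [Group T] (hC : IsCoarseSplitting R len x σ C)
    (hlen : IsLengthFunction len) : AreaLe R (σ 1) C := by
  simpa [EqWithin, hlen.map_one] using hC.mul 1 1

namespace IsCoarseSplitting

variable [Fintype ι] [Group T] {g g' : ι → MonoidAlgebra ℤ T} (hH : IsMetabelian H)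
  (hC : IsCoarseSplitting R len x σ C) (hlen : IsLengthFunction len)

include hC

theorem areaLe_commutator_commutatorHom (hg : g ∈ supportedOn ι {t | len t ≤ r}) (j : ι) :
    AreaLe R ⁅commutatorHom hH x σ (Multiplicative.ofAdd g), x j⁆ (l1Norm g * (C * (r + 1))) := by
  classical
  have hmon (k : ι) (t : T) (ht : len t ≤ r) : AreaLe R ⁅⁅(x k)⁻¹, σ t⁆, x j⁆ (C * (r + 1)) :=
    (hC.commutator_commutator j k t).commutator_symm.mono (by gcongr)
  refine l1Norm_induction (P := fun g n =>
    AreaLe R ⁅commutatorHom hH x σ (Multiplicative.ofAdd g), x j⁆ (n * (C * (r + 1))))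
    ?_ (fun g h m n hg hh => ?_) (fun k t ht => ?_) (fun k t ht => ?_) hg
  · simpa using AreaLe.one
  · rw [ofAdd_add, map_mul, add_mul]
    exact hg.commutator_mul_left hh
  · rw [commutatorHom_monomial, one_mul]
    exact hmon k t ht
  · rw [ofAdd_neg, map_inv, commutatorHom_monomial, one_mul]
    exact (hmon k t ht).commutator_inv_left

theorem normalForm_mul (hg : g ∈ supportedOn ι {t | len t ≤ r}) :
    EqWithin R (l1Norm g * l1Norm g' * C * (r + 2))
      (normalForm hH x σ g * normalForm hH x σ g') (normalForm hH x σ (g + g')) := by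
  let p (g : ι → MonoidAlgebra ℤ T) := zpowProd x Finset.univ.toList (augmentation g)
  let c (g : ι → MonoidAlgebra ℤ T) := commutatorHom hH x σ (Multiplicative.ofAdd g)
  have hswap : EqWithin R (l1Norm g' * (l1Norm g * (C * (r + 1)))) (c g * p g') (p g' * c g) :=
    eqWithin_mul_comm_iff.2 <| (AreaLe.commutator_zpowProd_right
      (hC.areaLe_commutator_commutatorHom hH hg)).mono <| by
        gcongr
        exact listNorm_augmentation_le g'
  have hcollect : EqWithin R (l1Norm g * l1Norm g' * C) (p g * p g') (p (g + g')) := by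
    simp only [p, map_add]
    refine (eqWithin_zpowProd_mul_zpowProd hC.commutator).mono ?_
    gcongr <;> exact listNorm_augmentation_le _
  have hc : c (g + g') = c g * c g' := by simp only [c, ofAdd_add, map_mul]
  refine EqWithin.mono (m := l1Norm g' * (l1Norm g * (C * (r + 1))) + l1Norm g * l1Norm g' * C) ?_
    (by lia)
  convert ((hswap.mul_left (p g)).mul_right (c g')).trans
    (z := p (g + g') * (c g * c g')) ?_ using 1
  · simp only [normalForm, p, c, mul_assoc]
  · rw [← hc]; rfl
  · convert hcollect.mul_right (c g * c g') using 1
    simp only [mul_assoc]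

theorem normalForm_neg (hg : g ∈ supportedOn ι {t | len t ≤ r}) :
    EqWithin R (l1Norm g * l1Norm g * C * (r + 2))
      (normalForm hH x σ (-g)) (normalForm hH x σ g)⁻¹ := by
  simpa using (hC.normalForm_mul hH (g' := -g) hg).mul_left (normalForm hH x σ g)⁻¹

end IsCoarseSplitting

end NormalForm

section Equivariance

variable {H : Type*} [Group H] {T ι κ : Type*} [Fintype ι] [Group T] {R : Set H} {x : ι → H}
  {σ : T → H} {C r : ℕ} {len : T → ℕ} {g g' : ι → MonoidAlgebra ℤ T}

/-- At `g`, the normal form turns multiplication by `s` into conjugation by `σ s`, up to an error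
whose area is linear in the length of `s`. -/
def IsEquivariantAt (hH : IsMetabelian H) (R : Set H) (len : T → ℕ) (x : ι → H) (σ : T → H)
    (g : ι → MonoidAlgebra ℤ T) : Prop :=
  ∃ K, ∀ s, EqWithin R (K * (len s + 1)) (normalForm hH x σ (MonoidAlgebra.of ℤ T s • g))
    (σ s * normalForm hH x σ g * (σ s)⁻¹)

namespace IsCoarseSplitting

variable (hH : IsMetabelian H) (hC : IsCoarseSplitting R len x σ C) (hlen : IsLengthFunction len)

include hC

theorem isEquivariantAt_monomial [DecidableEq ι] (k : ι) (t : T) :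
    IsEquivariantAt hH R len x σ (monomial k t) := by
  refine ⟨2 * (C * (len t + 1)), fun s => ?_⟩
  have hst : EqWithin R (C * (len s * len t + 1)) (σ (s * t)) (σ s * σ t) := (hC.mul s t).symm
  have key := (hst.mul_right (x k)).mul hst.inv
  rw [of_smul_monomial, normalForm_monomial, normalForm_monomial]
  refine EqWithin.mono (m := C * (len s * len t + 1) + C * (len s * len t + 1)) ?_ ?_
  · convert key using 1
    group
  · calc _ = 2 * C * (len s * len t + 1) := by ring
      _ ≤ 2 * C * ((len t + 1) * (len s + 1)) := by gcongr; lia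
      _ = _ := by ring

include hlen

theorem normalForm_of_smul_mul (hg : g ∈ supportedOn ι {t | len t ≤ r}) (s : T) :
    EqWithin R (l1Norm g * l1Norm g' * C * (r + 2) * (len s + 1))
      (normalForm hH x σ (MonoidAlgebra.of ℤ T s • g) *
        normalForm hH x σ (MonoidAlgebra.of ℤ T s • g'))
      (normalForm hH x σ (MonoidAlgebra.of ℤ T s • (g + g'))) := by
  rw [smul_add]
  refine (hC.normalForm_mul hH (hlen.of_smul_mem_supportedOn hg s)).mono ?_
  rw [mul_assoc (l1Norm g * l1Norm g' * C)]
  gcongr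
  · exact l1Norm_of_smul_le s g
  · exact l1Norm_of_smul_le s g'
  · lia

theorem isEquivariantAt_add (hg : IsEquivariantAt hH R len x σ g)
    (hg' : IsEquivariantAt hH R len x σ g') : IsEquivariantAt hH R len x σ (g + g') := by
  obtain ⟨K, hK⟩ := hg
  obtain ⟨K', hK'⟩ := hg'
  obtain ⟨r, hr⟩ := exists_mem_supportedOn_le len g
  set N := l1Norm g * l1Norm g' * C * (r + 2)
  refine ⟨N + (K + K') + N, fun s => ?_⟩
  have hsum : EqWithin R (N * (len s + 1)) _ _ := (hC.normalForm_of_smul_mul hH hlen hr s).symm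
  have hconj : EqWithin R N _ _ := (hC.normalForm_mul hH (g' := g') hr).conj (σ s)
  refine ((hsum.trans ((hK s).mul (hK' s))).trans ?_).mono (m := N * (len s + 1) +
    (K * (len s + 1) + K' * (len s + 1)) + N * (len s + 1)) (by lia)
  convert hconj.mono (Nat.le_mul_of_pos_right N (Nat.succ_pos (len s))) using 1
  group

theorem isEquivariantAt_neg (hg : IsEquivariantAt hH R len x σ g) :
    IsEquivariantAt hH R len x σ (-g) := by
  obtain ⟨K, hK⟩ := hg
  obtain ⟨r, hr⟩ := exists_mem_supportedOn_le len g
  set N := l1Norm g * l1Norm g * C * (r + 2)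
  refine ⟨N + K + N, fun s => ?_⟩
  have hneg : EqWithin R (N * (len s + 1)) (normalForm hH x σ (MonoidAlgebra.of ℤ T s • -g))
      (normalForm hH x σ (MonoidAlgebra.of ℤ T s • g))⁻¹ := by
    simpa using (hC.normalForm_of_smul_mul hH hlen (g' := -g) hr s).mul_left
      (normalForm hH x σ (MonoidAlgebra.of ℤ T s • g))⁻¹
  have hconj : EqWithin R N _ _ := ((hC.normalForm_neg hH hr).conj (σ s)).symm
  refine ((hneg.trans (hK s).inv).trans ?_).mono (m := N * (len s + 1) + K * (len s + 1) +
    N * (len s + 1)) (by lia)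
  convert hconj.mono (Nat.le_mul_of_pos_right N (Nat.succ_pos (len s))) using 1
  group

theorem isEquivariantAt (g : ι → MonoidAlgebra ℤ T) : IsEquivariantAt hH R len x σ g := by
  classical
  refine l1Norm_induction (U := Set.univ) (P := fun g _ => IsEquivariantAt hH R len x σ g) ?_
    (fun _ _ _ _ => hC.isEquivariantAt_add hH hlen)
    (fun k t _ => hC.isEquivariantAt_monomial hH k t)
    (fun k t _ => hC.isEquivariantAt_neg hH hlen (hC.isEquivariantAt_monomial hH k t))
    (fun _ _ _ => Set.mem_univ _)
  exact ⟨0, fun s => by simpa using EqWithin.refl 1⟩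

theorem exists_areaLe_normalForm_of_smul [Finite κ] {f : κ → ι → MonoidAlgebra ℤ T}
    (hf : ∀ i, ∃ n, AreaLe R (normalForm hH x σ (f i)) n) :
    ∃ K, ∀ i s, AreaLe R (normalForm hH x σ (MonoidAlgebra.of ℤ T s • f i)) (K * (len s + 1)) := by
  refine exists_forall_of_monotone (P := fun i K => ∀ s,
      AreaLe R (normalForm hH x σ (MonoidAlgebra.of ℤ T s • f i)) (K * (len s + 1)))
    (fun _ _ _ hKL h s => (h s).mono (by gcongr)) fun i => ?_
  obtain ⟨n, hn⟩ := hf i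
  obtain ⟨K, hK⟩ := hC.isEquivariantAt hH hlen (f i)
  exact ⟨K + n, fun s => ((hK s).areaLe (hn.conj (σ s))).mono (by lia)⟩

theorem areaLe_normalForm_linearCombination [Fintype κ] {f : κ → ι → MonoidAlgebra ℤ T} {M Q : ℕ}
    (hf_supp : ∀ i, f i ∈ supportedOn ι {t | len t ≤ M}) (hf_norm : ∀ i, l1Norm (f i) ≤ M)
    (hf : ∀ i s, AreaLe R (normalForm hH x σ (MonoidAlgebra.of ℤ T s • f i)) (Q * (len s + 1)))
    (hf_neg : ∀ i s,
      AreaLe R (normalForm hH x σ (MonoidAlgebra.of ℤ T s • -f i)) (Q * (len s + 1)))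
    {α : κ → MonoidAlgebra ℤ T} (hα : α ∈ supportedOn κ {t | len t ≤ r}) :
    AreaLe R (normalForm hH x σ (Fintype.linearCombination (MonoidAlgebra ℤ T) f α))
      ((M * M * C * (M + 2) + Q) * (l1Norm α ^ 2 * (r + 1))) := by
  classical
  set K := M * M * C * (M + 2) + Q
  have hQK {t : T} (ht : len t ≤ r) : Q * (len t + 1) ≤ K * (1 ^ 2 * (r + 1)) := by
    rw [one_pow, one_mul]
    gcongr
    exact Nat.le_add_left _ _
  refine (l1Norm_induction (P := fun α n => α ∈ supportedOn κ {t | len t ≤ r} ∧ l1Norm α ≤ n ∧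
      AreaLe R (normalForm hH x σ (Fintype.linearCombination (MonoidAlgebra ℤ T) f α))
        (K * (n ^ 2 * (r + 1))))
    ⟨zero_mem _, by simp, by simpa using AreaLe.one⟩
    (fun α β m n ⟨hα, hαm, hαK⟩ ⟨hβ, hβn, hβK⟩ => ⟨add_mem hα hβ,
      (l1Norm_add_le α β).trans (add_le_add hαm hβn), ?_⟩)
    (fun i t ht => ⟨monomial_mem_supportedOn ht i, by simp, ?_⟩)
    (fun i t ht => ⟨neg_mem (monomial_mem_supportedOn ht i), by simp, ?_⟩) hα).2.2
  · rw [map_add]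
    have hmul := (hC.normalForm_mul hH (g' := Fintype.linearCombination (MonoidAlgebra ℤ T) f β)
      (hlen.linearCombination_mem_supportedOn hf_supp hα)).symm
    refine (hmul.areaLe (hαK.mul hβK)).mono ?_
    calc _ ≤ m * M * (n * M) * C * ((M + 2) * (r + 1)) +
          (K * (m ^ 2 * (r + 1)) + K * (n ^ 2 * (r + 1))) := by
          gcongr
          · exact (l1Norm_linearCombination_le hf_norm α).trans (by gcongr)
          · exact (l1Norm_linearCombination_le hf_norm β).trans (by gcongr)
          · lia
      _ = M * M * C * (M + 2) * (m * n * (r + 1)) +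
          K * ((m ^ 2 + n ^ 2) * (r + 1)) := by ring
      _ ≤ 2 * K * (m * n * (r + 1)) + K * ((m ^ 2 + n ^ 2) * (r + 1)) := by
          gcongr ?_ * _ + _
          exact (Nat.le_add_right _ _).trans (Nat.le_mul_of_pos_left K two_pos)
      _ = K * ((m + n) ^ 2 * (r + 1)) := by ring
  · rw [linearCombination_monomial]
    exact (hf i t).mono (hQK ht)
  · rw [map_neg, linearCombination_monomial, ← smul_neg]
    exact (hf_neg i t).mono (hQK ht)

theorem exists_areaLe_normalForm_linearCombination [Fintype κ] {f : κ → ι → MonoidAlgebra ℤ T}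
    (hf : ∀ i, ∃ n, AreaLe R (normalForm hH x σ (f i)) n) :
    ∃ K, ∀ r, ∀ α ∈ supportedOn κ {t | len t ≤ r},
      AreaLe R (normalForm hH x σ (Fintype.linearCombination (MonoidAlgebra ℤ T) f α))
        (K * (l1Norm α ^ 2 * (r + 1))) := by
  have hf_neg (i : κ) : ∃ n, AreaLe R (normalForm hH x σ (-f i)) n := by
    obtain ⟨n, hn⟩ := hf i
    obtain ⟨r, hr⟩ := exists_mem_supportedOn_le len (f i)
    exact ⟨_, (hC.normalForm_neg hH hr).areaLe hn.inv⟩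
  obtain ⟨P, hP⟩ := hC.exists_areaLe_normalForm_of_smul hH hlen hf
  obtain ⟨Q, hQ⟩ := hC.exists_areaLe_normalForm_of_smul hH hlen hf_neg
  obtain ⟨M, hM⟩ := exists_forall_of_monotone (P := fun i M =>
      f i ∈ supportedOn ι {t | len t ≤ M} ∧ l1Norm (f i) ≤ M)
    (fun _ _ _ hMN h => ⟨supportedOn_le_mono hMN h.1, h.2.trans hMN⟩) fun i =>
      let ⟨r, hr⟩ := exists_mem_supportedOn_le len (f i)
      ⟨r + l1Norm (f i), supportedOn_le_mono (Nat.le_add_right _ _) hr, Nat.le_add_left _ _⟩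
  exact ⟨_, fun r α hα => hC.areaLe_normalForm_linearCombination hH hlen (fun i => (hM i).1)
    (fun i => (hM i).2) (fun i s => (hP i s).mono (Nat.mul_le_mul_right _ (Nat.le_add_right P Q)))
    (fun i s => (hQ i s).mono (Nat.mul_le_mul_right _ (Nat.le_add_left Q P))) hα⟩

end IsCoarseSplitting

end Equivariance

section Words

variable {H : Type*} [Group H] {T ι : Type*} [Fintype ι] [CommGroup T] {R : Set H} {x y : ι → H}
  {σ : T → H} {τ : ι → T} {C d n r : ℕ} {len : T → ℕ} {g : ι → MonoidAlgebra ℤ T}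

namespace IsCoarseSplitting

variable (hH : IsMetabelian H) (hC : IsCoarseSplitting R len x σ C) (hlen : IsLengthFunction len)

include hC

theorem normalForm_mul_letter [DecidableEq ι] (hg : g ∈ supportedOn ι {t | len t ≤ r}) (s t : T)
    (k : ι) :
    EqWithin R (l1Norm g * C * (r + 2) + C * (len t * len s + 1))
      (normalForm hH x σ g * σ t * (x k * σ s))
      (normalForm hH x σ (g + monomial k t) * σ (t * s)) := by
  convert (hC.normalForm_mul hH (g' := monomial k t) hg).mul (hC.mul t s) using 1
  · rw [l1Norm_monomial, mul_one]
  · rw [normalForm_monomial]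
    group

theorem normalForm_mul_letter_inv [DecidableEq ι] (s t : T) (k : ι)
    (hg : g - monomial k t ∈ supportedOn ι {t | len t ≤ r}) :
    EqWithin R (C * (len t * len s + 1) + l1Norm (g - monomial k t) * C * (r + 2))
      (normalForm hH x σ g * σ (t * s) * (x k * σ s)⁻¹)
      (normalForm hH x σ (g - monomial k t) * σ t) := by
  have hsplit := (hC.normalForm_mul hH (g' := monomial k t) hg).symm
  rw [sub_add_cancel, l1Norm_monomial, mul_one, normalForm_monomial] at hsplit
  convert (((hC.mul t s).symm.mul_left (normalForm hH x σ g)).mul_right (x k * σ s)⁻¹).trans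
    (z := normalForm hH x σ (g - monomial k t) * σ t) ?_ using 1
  convert hsplit.mul_right (σ t * (x k)⁻¹) using 1 <;> group

include hlen

theorem exists_normalForm_mul_letter (hy : ∀ k, y k = x k * σ (τ k)) (hτ : ∀ k, len (τ k) ≤ d)
    {t : T} (hg_norm : l1Norm g ≤ n) (hg : g ∈ supportedOn ι {t | len t ≤ d * n})
    (ht : len t ≤ d * n) (k : ι) (b : Bool) :
    ∃ g' t', l1Norm g' ≤ n + 1 ∧ g' ∈ supportedOn ι {t | len t ≤ d * (n + 1)} ∧
      len t' ≤ d * (n + 1) ∧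
      EqWithin R ((n + 1) * C * (d * (n + 1) + 2) + C * (d * (n + 1) * d + 1))
        (normalForm hH x σ g * σ t * cond b (y k) (y k)⁻¹) (normalForm hH x σ g' * σ t') := by
  classical
  have hn : n ≤ n + 1 := n.le_succ
  replace hg := supportedOn_le_mono (Nat.mul_le_mul_left d hn) hg
  have ht' : len t ≤ d * (n + 1) := ht.trans (Nat.mul_le_mul_left d hn)
  have cost {a b : ℕ} (ha : a ≤ n + 1) (hb : b ≤ d * (n + 1)) :
      a * C * (d * (n + 1) + 2) + C * (b * len (τ k) + 1) ≤
        (n + 1) * C * (d * (n + 1) + 2) + C * (d * (n + 1) * d + 1) := by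
    gcongr
    exact hτ k
  cases b
  · set s := t * (τ k)⁻¹
    have hs_len : len s ≤ d * (n + 1) := calc
      len s ≤ len t + len (τ k)⁻¹ := hlen.map_mul_le _ _
      _ ≤ d * n + d := add_le_add ht ((hlen.map_inv_le _).trans (hτ k))
    have hsub := sub_mem hg (monomial_mem_supportedOn (U := {t | len t ≤ d * (n + 1)}) hs_len k)
    have hsub_norm : l1Norm (g - monomial k s) ≤ n + 1 := by
      simpa [sub_eq_add_neg] using (l1Norm_add_le g (-monomial k s)).trans
        (add_le_add_left hg_norm _)
    refine ⟨g - monomial k s, s, hsub_norm, hsub, hs_len, ?_⟩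
    rw [← inv_mul_cancel_right t (τ k), hy]
    exact (hC.normalForm_mul_letter_inv hH (τ k) s k hsub).mono
      ((add_comm _ _).trans_le (cost hsub_norm hs_len))
  · refine ⟨g + monomial k t, t * τ k, ?_,
      add_mem hg (monomial_mem_supportedOn (U := {t | len t ≤ _}) ht' k), ?_, ?_⟩
    · exact (l1Norm_add_le _ _).trans (by simpa using hg_norm)
    · exact (hlen.map_mul_le t (τ k)).trans (add_le_add ht (hτ k))
    · rw [hy]
      exact (hC.normalForm_mul_letter hH hg (τ k) t k).mono (cost (hg_norm.trans hn) ht')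

theorem exists_eqWithin_lift_mk (hy : ∀ k, y k = x k * σ (τ k)) (hτ : ∀ k, len (τ k) ≤ d)
    (L : List (ι × Bool)) :
    ∃ g t, l1Norm g ≤ L.length ∧ g ∈ supportedOn ι {t | len t ≤ d * L.length} ∧
      len t ≤ d * L.length ∧ EqWithin R (C * (d ^ 2 + d + 3) * L.length ^ 3 + C)
        (FreeGroup.lift y (FreeGroup.mk L)) (normalForm hH x σ g * σ t) := by
  induction L using List.reverseRecOn with
  | nil =>
    refine ⟨0, 1, by simp, zero_mem _, by simp [hlen.map_one], ?_⟩
    simpa [FreeGroup.lift_mk, hlen.map_one] using ((hC.mul 1 1).mul_right (σ 1)⁻¹).symm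
  | append_singleton L p ih =>
    obtain ⟨g, t, hg_norm, hg, ht, hE⟩ := ih
    obtain ⟨g', t', hg'_norm, hg', ht', hE'⟩ :=
      hC.exists_normalForm_mul_letter hH hlen hy hτ hg_norm hg ht p.1 p.2
    rw [List.length_append, List.length_singleton]
    refine ⟨g', t', hg'_norm, hg', ht', ?_⟩
    have key := (hE.mul_right (cond p.2 (y p.1) (y p.1)⁻¹)).trans hE'
    rw [← FreeGroup.mul_mk, map_mul]
    refine EqWithin.mono (by simpa [FreeGroup.lift_mk] using key) ?_
    set N := L.length + 1
    have hN : N ≤ N ^ 2 := Nat.le_self_pow two_ne_zero N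
    have hN' : 1 ≤ N ^ 2 := Nat.one_le_pow _ _ L.length.succ_pos
    have hcube : L.length ^ 3 + N ^ 2 ≤ N ^ 3 := by simp only [N]; nlinarith
    calc C * (d ^ 2 + d + 3) * L.length ^ 3 + C + (N * C * (d * N + 2) + C * (d * N * d + 1))
      _ = C * (d ^ 2 + d + 3) * L.length ^ 3 + C + C * (d ^ 2 * N + d * N ^ 2 + 2 * N + 1) := by
          ring
      _ ≤ C * (d ^ 2 + d + 3) * L.length ^ 3 + C +
          C * (d ^ 2 * N ^ 2 + d * N ^ 2 + 2 * N ^ 2 + N ^ 2) := by gcongr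
      _ = C * (d ^ 2 + d + 3) * (L.length ^ 3 + N ^ 2) + C := by ring
      _ ≤ C * (d ^ 2 + d + 3) * N ^ 3 + C := by gcongr

theorem exists_eqWithin_lift (hy : ∀ k, y k = x k * σ (τ k)) :
    ∃ K, ∀ w : FreeGroup ι, ∃ g t, l1Norm g ≤ freeNorm w ∧
      g ∈ supportedOn ι {t | len t ≤ K * freeNorm w} ∧
      EqWithin R (K * (freeNorm w ^ 3 + 1)) (FreeGroup.lift y w) (normalForm hH x σ g * σ t) := by
  classical
  obtain ⟨d, hd⟩ : ∃ d, ∀ k, len (τ k) ≤ d :=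
    exists_forall_of_monotone (fun _ _ _ hmn h => h.trans hmn) fun k => ⟨_, le_rfl⟩
  refine ⟨d + C * (d ^ 2 + d + 3) + C, fun w => ?_⟩
  obtain ⟨g, t, hg_norm, hg, -, hE⟩ := hC.exists_eqWithin_lift_mk hH hlen hy hd w.toWord
  rw [FreeGroup.mk_toWord] at hE
  rw [freeNorm_eq_norm]
  refine ⟨g, t, hg_norm, supportedOn_le_mono ?_ hg, hE.mono ?_⟩
  · exact Nat.mul_le_mul_right _ (by lia)
  · rw [FreeGroup.norm]
    lia

end IsCoarseSplitting

end Words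

section SemidirectProduct

variable {N T : Type*} [CommGroup N] [CommGroup T] {φ : T →* MulAut N}

theorem right_eq_one_of_mem_commutator {g : N ⋊[φ] T} (hg : g ∈ commutator (N ⋊[φ] T)) :
    g.right = 1 :=
  Abelianization.commutator_subset_ker SemidirectProduct.rightHom hg

theorem isMetabelian_semidirectProduct : IsMetabelian (N ⋊[φ] T) := by
  intro g h hg hh
  have hg := right_eq_one_of_mem_commutator hg
  have hh := right_eq_one_of_mem_commutator hh
  ext <;> simp [hg, hh, mul_comm]

theorem isMetabelian_freeMetabelian (X : Type*) : IsMetabelian (FreeMetabelian X) := by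
  have key : derivedSeries (FreeMetabelian X) 2 = ⊥ := by
    rw [← map_derivedSeries_eq (QuotientGroup.mk'_surjective _), Subgroup.map_eq_bot_iff,
      QuotientGroup.ker_mk']
  intro a b ha hb
  rw [← commutatorElement_eq_one_iff_mul_comm, ← Subgroup.mem_bot, ← key]
  rw [← derivedSeries_one] at ha hb
  exact Subgroup.commutator_mem_commutator ha hb

variable {H G J ι : Type*} [Group H] [Group G] [Fintype J] {R : Set H} {gen : J → T}
  {coord : T → J → ℤ} {u : J → H} {q : ℕ} {gens : Fin q → T}

theorem IsCoordinateSystem.exists_eqWithin_zpowProd_mul (hcoord : IsCoordinateSystem gen coord)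
    {ρ : H →* G} (hρ : ρ.ker = Subgroup.normalClosure R) {s : T →* G}
    (hu : ∀ j, ρ (u j) = s (gen j)) :
    ∃ C, ∀ t t', EqWithin R
      (C * (listNorm Finset.univ.toList (coord t) * listNorm Finset.univ.toList (coord t') + 1))
      (zpowProd u Finset.univ.toList (coord t) * zpowProd u Finset.univ.toList (coord t'))
      (zpowProd u Finset.univ.toList (coord (t * t'))) := by
  obtain ⟨n, hn⟩ := hcoord.exists_natAbs_defect_le
  obtain ⟨C, hC⟩ := AreaLe.exists_forall (R := R) (w := fun p : J × J => ⁅u p.1, u p.2⁆) fun p => by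
    rw [← hρ, MonoidHom.mem_ker, map_commutatorElement, hu, hu, ← map_commutatorElement,
      commutatorElement_eq_one_iff_mul_comm.2 (mul_comm _ _), map_one]
  obtain ⟨D, hD⟩ := AreaLe.exists_forall (R := R)
    (w := fun p : {p : J × Set.Icc (-n : ℤ) n // gen p.1 ^ (p.2 : ℤ) = 1} =>
      u p.1.1 ^ (p.1.2 : ℤ)) fun p => by
    rw [← hρ, MonoidHom.mem_ker, map_zpow, hu, ← map_zpow, p.2, map_one]
  have hdefect (t t' : T) (j : J) :
      EqWithin R D (u j ^ (coord t + coord t') j) (u j ^ coord (t * t') j) := by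
    rw [EqWithin, ← zpow_sub]
    exact hD ⟨(j, ⟨coord t j + coord t' j - coord (t * t') j, by
      have := hn t t' j; rw [Set.mem_Icc]; lia⟩),
      hcoord.gen_zpow_defect t t' j⟩
  refine ⟨C + (Finset.univ : Finset J).toList.length * D, fun t t' => ?_⟩
  refine ((eqWithin_zpowProd_mul_zpowProd (l := Finset.univ.toList) fun i j => hC (i, j)).trans
    (eqWithin_zpowProd_congr (hdefect t t'))).mono ?_
  lia

theorem commutatorElement_inl_commutatorElement_inl (m m' : N) (g : N ⋊[φ] T) :
    ⁅(SemidirectProduct.inl m : N ⋊[φ] T), ⁅(SemidirectProduct.inl m' : N ⋊[φ] T), g⁆⁆ = 1 := by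
  rw [commutatorElement_eq_one_iff_mul_comm]
  ext <;> simp [commutatorElement_def, mul_comm]

theorem exists_isCoarseSplitting [Finite ι] (hgens : Subgroup.closure (Set.range gens) = ⊤)
    (hH : IsMetabelian H) {ρ : H →* N ⋊[φ] T} (hρ : Surjective ρ)
    (hker : ρ.ker = Subgroup.normalClosure R) (y : ι → H) :
    ∃ x σ C, IsCoarseSplitting R (wordLen gens) x σ C ∧
      (∀ k, ρ (x k) = SemidirectProduct.inl (ρ (y k)).left) ∧
      (∀ t, ρ (σ t) = SemidirectProduct.inr t) ∧ ∀ k, y k = x k * σ (ρ (y k)).right := by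
  have : Group.FG T := Group.fg_iff.2 ⟨_, hgens, Set.finite_range gens⟩
  obtain ⟨J, _, gen, coord, hcoord⟩ := exists_isCoordinateSystem T
  choose u hu using fun j => hρ (SemidirectProduct.inr (gen j))
  let σ (t : T) : H := zpowProd u Finset.univ.toList (coord t)
  let x (k : ι) : H := y k * (σ (ρ (y k)).right)⁻¹
  have hσ (t : T) : ρ (σ t) = SemidirectProduct.inr t := by
    rw [map_zpowProd, funext hu, ← map_zpowProd, hcoord.zpowProd_coord]
  have hx (k : ι) : ρ (x k) = SemidirectProduct.inl (ρ (y k)).left := by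
    rw [map_mul, map_inv, hσ, mul_inv_eq_iff_eq_mul, SemidirectProduct.inl_left_mul_inr_right]
  obtain ⟨M, hM⟩ := exists_le_mul_wordLen hgens
    (F := fun t => listNorm Finset.univ.toList (coord t)) (by simp [hcoord.coord_one, listNorm])
    (fun s t => listNorm_le_add (hcoord.natAbs_coord_mul_le s t))
  obtain ⟨C₁, hC₁⟩ := hcoord.exists_eqWithin_zpowProd_mul hker hu
  obtain ⟨C₂, hC₂⟩ := AreaLe.exists_forall (R := R)
    (w := fun p : ι × ι × J => ⁅x p.1, ⁅(x p.2.1)⁻¹, u p.2.2⁆⁆) fun p => by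
      rw [← hker, MonoidHom.mem_ker, map_commutatorElement, map_commutatorElement, map_inv, hx, hx,
        ← map_inv, commutatorElement_inl_commutatorElement_inl]
  obtain ⟨C₃, hC₃⟩ := AreaLe.exists_forall (R := R)
    (w := fun p : ι × ι => ⁅x p.1, x p.2⁆) fun p => by
      rw [← hker, MonoidHom.mem_ker, map_commutatorElement, hx, hx, ← map_commutatorElement,
        commutatorElement_eq_one_iff_mul_comm.2 (mul_comm _ _), map_one]
  refine ⟨x, σ, C₁ * (M * M + 1) + M * C₂ + C₃, ⟨fun s t => (hC₁ s t).mono ?_,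
    fun i k t => (AreaLe.commutator_commutator_zpowProd_right hH fun j => hC₂ (i, k, j)).mono ?_,
    fun i j => (hC₃ (i, j)).mono (Nat.le_add_left _ _)⟩, hx, hσ, fun k => by simp [x]⟩
  · calc _ ≤ C₁ * (M * wordLen gens s * (M * wordLen gens t) + 1) := by gcongr <;> exact hM _
      _ ≤ C₁ * ((M * M + 1) * (wordLen gens s * wordLen gens t + 1)) := by gcongr; lia
      _ = C₁ * (M * M + 1) * (wordLen gens s * wordLen gens t + 1) := by ring
      _ ≤ _ := by gcongr; lia
  · calc _ ≤ M * wordLen gens t * C₂ := by gcongr; exact hM t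
      _ = M * C₂ * wordLen gens t := by ring
      _ ≤ _ := by gcongr <;> lia

end SemidirectProduct

section ModuleAction

variable {H T A ι κ : Type*} [Group H] [CommGroup T] [AddCommGroup A] [Module (MonoidAlgebra ℤ T) A]

theorem modAction_apply (t : T) (b : A) :
    modAction T A t (Multiplicative.ofAdd b) = Multiplicative.ofAdd (MonoidAlgebra.of ℤ T t • b) :=
  rfl

/-- The elements `(b, t)` of `A ⋊ T` with `b` in a given submodule of `A`. -/
def leftComponentSubgroup (W : Submodule (MonoidAlgebra ℤ T) A) :
    Subgroup (Multiplicative A ⋊[modAction T A] T) where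
  carrier := {g | g.left.toAdd ∈ W}
  one_mem' := W.zero_mem
  mul_mem' hg hh := W.add_mem hg (W.smul_mem _ hh)
  inv_mem' hg := W.smul_mem _ (W.neg_mem hg)

theorem span_range_left_eq_top {ρ : H →* Multiplicative A ⋊[modAction T A] T} (hρ : Surjective ρ)
    {y : ι → H} (hy : Subgroup.closure (Set.range y) = ⊤) :
    Submodule.span (MonoidAlgebra ℤ T) (Set.range fun k => (ρ (y k)).left.toAdd) = ⊤ := by
  set W := Submodule.span (MonoidAlgebra ℤ T) (Set.range fun k => (ρ (y k)).left.toAdd)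
  have hW : (leftComponentSubgroup W).comap ρ = ⊤ := by
    rw [eq_top_iff, ← hy, Subgroup.closure_le]
    rintro _ ⟨k, rfl⟩
    exact Submodule.subset_span ⟨k, rfl⟩
  refine Submodule.eq_top_iff'.2 fun b => ?_
  obtain ⟨h, hh⟩ := hρ (SemidirectProduct.inl (Multiplicative.ofAdd b))
  have hb : h ∈ (leftComponentSubgroup W).comap ρ := hW ▸ Subgroup.mem_top h
  rwa [Subgroup.mem_comap, hh] at hb

variable [Fintype ι] {R : Set H} {len : T → ℕ} {x : ι → H} {σ : T → H} {C : ℕ} {a : ι → A}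
  {ρ : H →* Multiplicative A ⋊[modAction T A] T} {g : ι → MonoidAlgebra ℤ T} {t : T}

namespace IsCoarseSplitting

variable (hH : IsMetabelian H) (hC : IsCoarseSplitting R len x σ C)
  (hker : ρ.ker = Subgroup.normalClosure R)
  (hx : ∀ k, ρ (x k) = SemidirectProduct.inl (Multiplicative.ofAdd (a k)))
  (hσ : ∀ t, ρ (σ t) = SemidirectProduct.inr t)

include hC hker hx hσ

theorem map_normalForm (g : ι → MonoidAlgebra ℤ T) :
    ρ (normalForm hH x σ g) = SemidirectProduct.inl
      (Multiplicative.ofAdd (Fintype.linearCombination (MonoidAlgebra ℤ T) a g)) := by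
  classical
  have hmon (k : ι) (t : T) : ρ (normalForm hH x σ (monomial k t)) = SemidirectProduct.inl
      (Multiplicative.ofAdd (Fintype.linearCombination (MonoidAlgebra ℤ T) a (monomial k t))) := by
    rw [normalForm_monomial, map_mul, map_mul, map_inv, hσ, hx, ← map_inv,
      ← SemidirectProduct.inl_aut, modAction_apply, linearCombination_monomial]
  refine l1Norm_induction (U := Set.univ) (P := fun g _ => ρ (normalForm hH x σ g) =
      SemidirectProduct.inl (Multiplicative.ofAdd (Fintype.linearCombination _ a g)))
    (by simp) (fun g h _ _ hg hh => ?_) (fun k t _ => hmon k t) (fun k t _ => ?_)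
    (fun _ _ _ => Set.mem_univ _)
  · obtain ⟨r, hr⟩ := exists_mem_supportedOn_le len g
    rw [← (hC.normalForm_mul hH (g' := h) hr).map_eq hker, map_mul, hg, hh, map_add, ofAdd_add,
      map_mul]
  · obtain ⟨r, hr⟩ := exists_mem_supportedOn_le len (monomial k t)
    rw [(hC.normalForm_neg hH hr).map_eq hker, map_inv, hmon, map_neg, ofAdd_neg, map_inv]

theorem map_normalForm_mul_eq_one_iff :
    ρ (normalForm hH x σ g * σ t) = 1 ↔
      g ∈ LinearMap.ker (Fintype.linearCombination (MonoidAlgebra ℤ T) a) ∧ t = 1 := by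
  rw [map_mul, hC.map_normalForm hH hker hx hσ, hσ, SemidirectProduct.ext_iff, LinearMap.mem_ker]
  simp

theorem exists_areaLe_normalForm (hg : g ∈ LinearMap.ker
      (Fintype.linearCombination (MonoidAlgebra ℤ T) a)) :
    ∃ n, AreaLe R (normalForm hH x σ g) n := by
  rw [exists_areaLe_iff_mem_normalClosure, ← hker, MonoidHom.mem_ker,
    hC.map_normalForm hH hker hx hσ, LinearMap.mem_ker.1 hg, ofAdd_zero, map_one]

end IsCoarseSplitting

end ModuleAction

section Filling

variable {H T A ι κ : Type*} [Group H] [CommGroup T] [AddCommGroup A] [Module (MonoidAlgebra ℤ T) A]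
  [Fintype ι] [Fintype κ] {R : Set H} {len : T → ℕ} {x y : ι → H} {σ : T → H} {C : ℕ} {a : ι → A}
  {τ : ι → T} {ρ : H →* Multiplicative A ⋊[modAction T A] T} {f : κ → ι → MonoidAlgebra ℤ T}

theorem sq_mul_le_max_cube (m n : ℕ) : m ^ 2 * n ≤ max (n ^ 3) (m ^ 3) := by
  rcases le_total n m with h | h
  · exact le_max_of_le_right ((Nat.mul_le_mul_left _ h).trans_eq (pow_succ m 2).symm)
  · exact le_max_of_le_left ((Nat.mul_le_mul_right n (Nat.pow_le_pow_left h 2)).trans_eq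
      (pow_succ n 2).symm)

namespace IsCoarseSplitting

variable (hC : IsCoarseSplitting R len x σ C) (hlen : IsLengthFunction len)

include hC hlen

theorem exists_areaLe_normalForm_linearCombination_max_cube (hH : IsMetabelian H)
    (hf : ∀ i, ∃ n, AreaLe R (normalForm hH x σ (f i)) n) :
    ∃ K, ∀ n α,
      Fintype.linearCombination (MonoidAlgebra ℤ T) f α ∈ supportedOn ι {t | len t ≤ n} →
      AreaLe R (normalForm hH x σ (Fintype.linearCombination (MonoidAlgebra ℤ T) f α))
        (K * max (n ^ 3) (l1Norm α ^ 3)) := by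
  obtain ⟨c, hc⟩ := exists_forall_of_monotone
    (P := fun i c => f i ∈ supportedOn ι {t | len t ≤ c})
    (fun _ _ _ hcd h => supportedOn_le_mono hcd h) fun i => exists_mem_supportedOn_le len (f i)
  obtain ⟨K, hK⟩ := hC.exists_areaLe_normalForm_linearCombination hH hlen hf
  refine ⟨K * (2 * c + 2), fun n α hα => ?_⟩
  obtain ⟨β, hβ, hβ_supp, hβα⟩ := exists_linearCombination_eq_of_mem_supportedOn hlen hc hα
  rw [← hβ]
  refine (hK _ β hβ_supp).mono ?_
  set D := l1Norm α
  have hn : D ^ 2 * n ≤ max (n ^ 3) (D ^ 3) := sq_mul_le_max_cube D n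
  have hD : D ^ 3 ≤ max (n ^ 3) (D ^ 3) := le_max_right _ _
  have hD' : D ^ 2 ≤ D ^ 3 := by
    rcases D.eq_zero_or_pos with h | h
    · simp [h]
    · exact Nat.pow_le_pow_right h (by norm_num)
  calc K * (l1Norm β ^ 2 * (n + 2 * c * D + 1))
      ≤ K * (D ^ 2 * (n + 2 * c * D + 1)) := by gcongr
    _ = K * (D ^ 2 * n + 2 * c * D ^ 3 + D ^ 2) := by ring
    _ ≤ K * (max (n ^ 3) (D ^ 3) + 2 * c * max (n ^ 3) (D ^ 3) + max (n ^ 3) (D ^ 3)) := by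
        gcongr
        exact hD'.trans hD
    _ = K * (2 * c + 2) * max (n ^ 3) (D ^ 3) := by ring

theorem exists_areaLe_lift (hH : IsMetabelian H) (hker : ρ.ker = Subgroup.normalClosure R)
    (hx : ∀ k, ρ (x k) = SemidirectProduct.inl (Multiplicative.ofAdd (a k)))
    (hσ : ∀ t, ρ (σ t) = SemidirectProduct.inr t) (hy : ∀ k, y k = x k * σ (τ k))
    (hf : ∀ i, f i ∈ LinearMap.ker (Fintype.linearCombination (MonoidAlgebra ℤ T) a)) :
    ∃ K, ∀ w : FreeGroup ι, FreeGroup.lift y w ∈ Subgroup.normalClosure R →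
      ∃ g ∈ LinearMap.ker (Fintype.linearCombination (MonoidAlgebra ℤ T) a),
        l1Norm g ≤ freeNorm w ∧ g ∈ supportedOn ι {t | len t ≤ K * freeNorm w} ∧
        ∀ α, Fintype.linearCombination (MonoidAlgebra ℤ T) f α = g → AreaLe R (FreeGroup.lift y w)
          (K * (max (freeNorm w ^ 3) (l1Norm α ^ 3) + 1)) := by
  obtain ⟨K₁, hK₁⟩ := hC.exists_eqWithin_lift hH hlen hy
  obtain ⟨K₂, hK₂⟩ := hC.exists_areaLe_normalForm_linearCombination_max_cube hlen hH fun i =>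
    hC.exists_areaLe_normalForm hH hker hx hσ (hf i)
  refine ⟨K₁ + K₂ * (K₁ + 1) ^ 3 + C, fun w hw => ?_⟩
  obtain ⟨g, t, hgw, hg_supp, hwg⟩ := hK₁ w
  rw [← hker, MonoidHom.mem_ker, hwg.map_eq hker, hC.map_normalForm_mul_eq_one_iff hH hker hx hσ]
    at hw
  obtain ⟨hg, rfl⟩ := hw
  refine ⟨g, hg, hgw, supportedOn_le_mono (by gcongr; lia) hg_supp, ?_⟩
  rintro α rfl
  refine (hwg.areaLe ((hK₂ _ α hg_supp).mul (hC.areaLe_map_one hlen))).mono ?_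
  set p := freeNorm w
  set B := max (p ^ 3) (l1Norm α ^ 3)
  have hB : max ((K₁ * p) ^ 3) (l1Norm α ^ 3) ≤ (K₁ + 1) ^ 3 * B := by
    refine max_le ?_ ?_
    · rw [mul_pow]
      gcongr
      · lia
      · exact le_max_left _ _
    · exact (le_max_right _ _).trans (Nat.le_mul_of_pos_left B (by positivity))
  have hp : p ^ 3 ≤ B := le_max_left _ _
  calc _ ≤ K₁ * (B + 1) + (K₂ * ((K₁ + 1) ^ 3 * B) + C) := by gcongr
    _ ≤ (K₁ + K₂ * (K₁ + 1) ^ 3 + C) * (B + 1) := by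
      rw [← mul_assoc]
      lia

end IsCoarseSplitting

end Filling

section Presentation

variable {ι X : Type*} {n : ℕ}

/-- The standard generators of a free metabelian group. -/
def FreeMetabelian.of (k : X) : FreeMetabelian X :=
  QuotientGroup.mk' (derivedSeries (FreeGroup X) 2) (FreeGroup.of k)

theorem FreeMetabelian.closure_range_of :
    Subgroup.closure (Set.range (FreeMetabelian.of : X → FreeMetabelian X)) = ⊤ := by
  change Subgroup.closure (Set.range (QuotientGroup.mk' (derivedSeries (FreeGroup X) 2) ∘
    FreeGroup.of)) = ⊤
  rw [Set.range_comp, ← MonoidHom.map_closure, FreeGroup.closure_range_of,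
    Subgroup.map_top_of_surjective _ (QuotientGroup.mk'_surjective _)]

theorem freeNorm_map_equiv_le (ε : X ≃ ι) (v : FreeGroup X) :
    freeNorm (FreeGroup.map ε v) ≤ freeNorm v := by
  classical
  rw [freeNorm_eq_norm, freeNorm_eq_norm, ← FreeGroup.mk_toWord (x := v), FreeGroup.map.mk]
  exact FreeGroup.norm_mk_le.trans_eq (by simp [FreeGroup.norm])

theorem mNormLe.exists_lift_eq {w : FreeMetabelian X} (hw : mNormLe w n) (ε : ι ≃ X) :
    ∃ v : FreeGroup ι, FreeGroup.lift (FreeMetabelian.of ∘ ε) v = w ∧ freeNorm v ≤ n := by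
  obtain ⟨v, rfl, hv⟩ := hw
  have hlift : (FreeGroup.lift (FreeMetabelian.of ∘ ε)).comp
      (FreeGroup.map ε.symm) = QuotientGroup.mk' (derivedSeries (FreeGroup X) 2) :=
    FreeGroup.ext_hom _ _ fun k => by
      rw [MonoidHom.comp_apply, FreeGroup.map.of, FreeGroup.lift_apply_of, comp_apply,
        Equiv.apply_symm_apply, FreeMetabelian.of]
  exact ⟨FreeGroup.map ε.symm v, DFunLike.congr_fun hlift v,
    (freeNorm_map_equiv_le ε.symm v).trans hv⟩

end Presentation

section Comparison

theorem exists_isModDehnFunctionOf {T : Type*} [CommGroup T] {q m l : ℕ} {gens : Fin q → T}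
    (hgens : Subgroup.closure (Set.range gens) = ⊤) (f : Fin l → Fin m → MonoidAlgebra ℤ T) :
    ∃ δ, IsModDehnFunctionOf gens (Submodule.span (MonoidAlgebra ℤ T) (Set.range f)) f δ := by
  suffices h : ∀ n, ∃ N, ∀ g ∈ Submodule.span (MonoidAlgebra ℤ T) (Set.range f),
      modNorm gens g ≤ n → ModAreaLe f g N from
    ⟨fun n => sInf _, fun n => ⟨Nat.sInf_mem (h n), fun _ => Nat.sInf_le⟩⟩
  intro n
  have := ((finite_setOf_modNorm_le hgens n).subset fun _ h => h.2 :
    {g | g ∈ Submodule.span (MonoidAlgebra ℤ T) (Set.range f) ∧ modNorm gens g ≤ n}.Finite)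
      |>.to_subtype
  obtain ⟨N, hN⟩ := exists_forall_of_monotone
    (P := fun (g : {g | g ∈ Submodule.span (MonoidAlgebra ℤ T) (Set.range f) ∧
      modNorm gens g ≤ n}) N => ModAreaLe f g.1 N)
    (fun _ _ _ hMN ⟨α, hα, hαM⟩ => ⟨α, hα, hαM.trans hMN⟩) fun g =>
      let ⟨α, hα⟩ := (Submodule.mem_span_range_iff_exists_fun _).1 g.2.1
      ⟨_, α, hα.symm, le_rfl⟩
  exact ⟨N, fun g hg hgn => hN ⟨g, hg, hgn⟩⟩

theorem exists_span_range_eq {T M : Type*} [CommGroup T] [Group.FG T] [AddCommGroup M]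
    [Module (MonoidAlgebra ℤ T) M] [Module.Finite (MonoidAlgebra ℤ T) M]
    (S : Submodule (MonoidAlgebra ℤ T) M) :
    ∃ (l : ℕ) (f : Fin l → M), Submodule.span (MonoidAlgebra ℤ T) (Set.range f) = S := by
  have : IsNoetherianRing (MonoidAlgebra ℤ T) := Algebra.FiniteType.isNoetherianRing ℤ _
  exact Submodule.fg_iff_exists_fin_generating_family.1 (IsNoetherian.noetherian S)

theorem dominates_max_cube_of_areaLe_lift {X T : Type*} [CommGroup T] {q m l K : ℕ}
    {gens : Fin q → T} {R : Set (FreeMetabelian X)} {δ δ' : ℕ → ℕ}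
    {S : Submodule (MonoidAlgebra ℤ T) (Fin m → MonoidAlgebra ℤ T)}
    {f : Fin l → Fin m → MonoidAlgebra ℤ T} (hδ : IsRelDehnFunctionOf R δ)
    (hδ' : IsModDehnFunctionOf gens S f δ') (ε : Fin m ≃ X)
    (hfill : ∀ w : FreeGroup (Fin m),
      FreeGroup.lift (FreeMetabelian.of ∘ ε) w ∈ Subgroup.normalClosure R →
      ∃ g ∈ S, l1Norm g ≤ freeNorm w ∧ g ∈ supportedOn _ {t | wordLen gens t ≤ K * freeNorm w} ∧
        ∀ α, Fintype.linearCombination (MonoidAlgebra ℤ T) f α = g →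
          AreaLe R (FreeGroup.lift (FreeMetabelian.of ∘ ε) w)
            (K * (max (freeNorm w ^ 3) (l1Norm α ^ 3) + 1))) :
    Dominates δ fun n => max (n ^ 3) (δ' (n ^ 2) ^ 3) := by
  refine ⟨2 * K + 1, by lia, fun n => (hδ n).2 fun w hw hwn => ?_⟩
  obtain ⟨v, rfl, hv⟩ := hwn.exists_lift_eq ε
  obtain ⟨g, hgS, hgv, hg_supp, harea⟩ := hfill v hw
  have hnorm : modNorm gens g ≤ ((2 * K + 1) * n) ^ 2 :=
    calc modNorm gens g ≤ n * (1 + 2 * (K * n)) := by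
          refine (modNorm_le hg_supp).trans ?_
          gcongr
          exact hgv.trans hv
      _ ≤ (2 * K + 1) * n ^ 2 := by nlinarith [Nat.le_mul_self n]
      _ ≤ ((2 * K + 1) * n) ^ 2 := by
          rw [mul_pow]
          gcongr
          exact Nat.le_self_pow two_ne_zero _
  obtain ⟨α, hα, hαD⟩ := (hδ' _).1 g hgS hnorm
  refine (harea α (by rw [hα, Fintype.linearCombination_apply])).mono ?_
  calc K * (max (freeNorm v ^ 3) (l1Norm α ^ 3) + 1)
      ≤ (2 * K + 1) * (max (((2 * K + 1) * n) ^ 3) (δ' (((2 * K + 1) * n) ^ 2) ^ 3) + 1) := by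
        gcongr
        · lia
        · exact hv.trans (Nat.le_mul_of_pos_left n (by lia))
        · exact hαD
    _ ≤ _ := by lia

end Comparison

theorem semidirect_relative_dehn_general
    (T : Type*) [CommGroup T] (q : ℕ) (gens : Fin q → T)
    (hgens : Subgroup.closure (Set.range gens) = ⊤)
    (A : Type*) [AddCommGroup A] [Module (MonoidAlgebra ℤ T) A]
    (Y : Type*) [Finite Y] (RR : Set (FreeMetabelian Y))
    (eG : SemidirectProduct (Multiplicative A) T (modAction T A) ≃*
      FreeMetabelian Y ⧸ Subgroup.normalClosure RR)
    (δt : ℕ → ℕ) (hδt : IsRelDehnFunctionOf RR δt) :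
    Group.FG (SemidirectProduct (Multiplicative A) T (modAction T A)) ∧
    IsMetabelian (SemidirectProduct (Multiplicative A) T (modAction T A)) ∧
    ∃ (m : ℕ) (a : Fin m → A),
      Submodule.span (MonoidAlgebra ℤ T) (Set.range a) = ⊤ ∧
      ∃ S : Submodule (MonoidAlgebra ℤ T) (Fin m → MonoidAlgebra ℤ T),
        (∀ μ : Fin m → MonoidAlgebra ℤ T, μ ∈ S ↔ (∑ j, μ j • a j) = 0) ∧
        ∃ (l : ℕ) (f : Fin l → (Fin m → MonoidAlgebra ℤ T)) (δA : ℕ → ℕ),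
          Submodule.span (MonoidAlgebra ℤ T) (Set.range f) = S ∧
          IsModDehnFunctionOf gens S f δA ∧
          Dominates δt (fun n => max (n ^ 3) ((δA (n ^ 2)) ^ 3)) := by
  have : Group.FG T := Group.fg_iff.2 ⟨_, hgens, Set.finite_range gens⟩
  obtain ⟨m, ⟨ε⟩⟩ := Finite.exists_equiv_fin Y
  let ρ := eG.symm.toMonoidHom.comp (QuotientGroup.mk' (Subgroup.normalClosure RR))
  have hρ : Surjective ρ := eG.symm.surjective.comp (QuotientGroup.mk'_surjective _)
  have hker : ρ.ker = Subgroup.normalClosure RR :=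
    (MonoidHom.ker_mulEquiv_comp _ eG.symm).trans (QuotientGroup.ker_mk' _)
  let y : Fin m → FreeMetabelian Y := FreeMetabelian.of ∘ ε.symm
  have hy : Subgroup.closure (Set.range y) = ⊤ := by
    rw [ε.symm.surjective.range_comp, FreeMetabelian.closure_range_of]
  let a (k : Fin m) : A := (ρ (y k)).left.toAdd
  obtain ⟨l, f, hf⟩ := exists_span_range_eq
    (LinearMap.ker (Fintype.linearCombination (MonoidAlgebra ℤ T) a))
  obtain ⟨δA, hδA⟩ := exists_isModDehnFunctionOf hgens f
  rw [hf] at hδA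
  obtain ⟨x, σ, C, hC, hx, hσ, hyx⟩ :=
    exists_isCoarseSplitting hgens (isMetabelian_freeMetabelian Y) hρ hker y
  obtain ⟨K, hK⟩ := hC.exists_areaLe_lift (isLengthFunction_wordLen hgens)
    (isMetabelian_freeMetabelian Y) hker hx hσ hyx (f := f) fun i =>
      hf ▸ Submodule.subset_span ⟨i, rfl⟩
  exact ⟨Group.fg_of_surjective hρ, isMetabelian_semidirectProduct, m, a,
    span_range_left_eq_top hρ hy, _, fun μ => LinearMap.mem_ker, l, f, δA, hf, hδA,
    dominates_max_cube_of_areaLe_lift hδt hδA ε.symm hK⟩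

/-- For `G = A ⋊ T` with `T` finitely generated abelian and `A` a
finitely generated `ℤT`-module, `G` is finitely generated metabelian and its relative
Dehn function satisfies `δ̃_G(n) ≼ max{n³, δ_A(n²)³}`. -/
theorem semidirect_relative_dehn
    (T : Type) [CommGroup T] (q : ℕ) (gens : Fin q → T)
    (hgens : Subgroup.closure (Set.range gens) = ⊤)
    (A : Type) [AddCommGroup A] [Module (MonoidAlgebra ℤ T) A]
    [Module.Finite (MonoidAlgebra ℤ T) A]
    -- a finite relative presentation of `G = A ⋊ T`, with relative Dehn function `δt`:
    (Y : Type) [Finite Y] (RR : Set (FreeMetabelian Y)) (hRR : RR.Finite)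
    (eG : SemidirectProduct (Multiplicative A) T (modAction T A) ≃*
      FreeMetabelian Y ⧸ Subgroup.normalClosure RR)
    (δt : ℕ → ℕ) (hδt : IsRelDehnFunctionOf RR δt) :
    Group.FG (SemidirectProduct (Multiplicative A) T (modAction T A)) ∧
    IsMetabelian (SemidirectProduct (Multiplicative A) T (modAction T A)) ∧
    ∃ (m : ℕ) (a : Fin m → A),
      Submodule.span (MonoidAlgebra ℤ T) (Set.range a) = ⊤ ∧
      ∃ S : Submodule (MonoidAlgebra ℤ T) (Fin m → MonoidAlgebra ℤ T),
        (∀ μ : Fin m → MonoidAlgebra ℤ T, μ ∈ S ↔ (∑ j, μ j • a j) = 0) ∧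
        ∃ (l : ℕ) (f : Fin l → (Fin m → MonoidAlgebra ℤ T)) (δA : ℕ → ℕ),
          Submodule.span (MonoidAlgebra ℤ T) (Set.range f) = S ∧
          IsModDehnFunctionOf gens S f δA ∧
          Dominates δt (fun n => max (n ^ 3) ((δA (n ^ 2)) ^ 3)) := by
  exact semidirect_relative_dehn_general T q gens hgens A Y RR eG δt hδt
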